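/- arXiv:2512.01742 — 8 statements merged into one kernel-verified Lean document; each statement's English description precedes it below -/
import Mathlib

section
/- Let a < b be real numbers and let f : [a, b] → ℝ be a continuous, monotonically increasing function such that for every x ∈ [a, b) the upper right Dini derivative D⁺f(x) = limsup_{y → x⁺} (f(y) − f(x))/(y − x) is a (finite) real number. Then f is absolutely continuous on [a, b]: for every ε > 0 there exists δ > 0 such that for every finite collection of pairwise disjoint open subintervals (a₁, b₁), …, (a_m, b_m) of [a, b] with Σᵢ (bᵢ − aᵢ) < δ one has Σᵢ (f(bᵢ) − f(aᵢ)) < ε. -/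
open Filter Set

/-!
A continuous increasing `f` pushes its Stieltjes measure `μ` forward to a measure dominated by
Lebesgue measure, so `μ s ≤ |f(s)|`, and `f` is absolutely continuous as soon as it maps null sets
to null sets. Where the upper right Dini derivative is finite, `f` satisfies a Lipschitz bound to
the right of each point; sorting the points by the constant of this bound and by a rational up to
which it holds splits any set into countably many pieces on which `f` is Lipschitz, and Lipschitz
maps preserve null sets.
-/

open Asymptotics MeasureTheory Metric
open scoped Topology

section Stieltjes

variable {g : StieltjesFunction ℝ}

theorem stieltjesMeasure_le_ediam_image_of_isBounded (hg : Continuous g) {s : Set ℝ}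
    (hs : Bornology.IsBounded s) : g.measure s ≤ ediam (g '' s) := by
  obtain rfl | hne := s.eq_empty_or_nonempty
  · simp
  have hsub : s ⊆ Icc (sInf s) (sSup s) := fun x hx =>
    ⟨csInf_le hs.bddBelow hx, le_csSup hs.bddAbove hx⟩
  have hmem {x : ℝ} (hx : x ∈ closure s) : g x ∈ closure (g '' s) :=
    image_closure_subset_closure_image hg (mem_image_of_mem g hx)
  calc g.measure s
    _ ≤ g.measure (Icc (sInf s) (sSup s)) := measure_mono hsub
    _ = ENNReal.ofReal (g (sSup s) - g (sInf s)) := by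
      rw [g.measure_Icc, hg.continuousWithinAt.leftLim_eq]
    _ ≤ edist (g (sSup s)) (g (sInf s)) := by
      rw [edist_dist]
      exact ENNReal.ofReal_le_ofReal (le_abs_self _)
    _ ≤ ediam (closure (g '' s)) :=
      edist_le_ediam_of_mem (hmem (csSup_mem_closure hne hs.bddAbove))
        (hmem (csInf_mem_closure hne hs.bddBelow))
    _ = ediam (g '' s) := ediam_closure _

theorem stieltjesMeasure_le_ediam_image (hg : Continuous g) (s : Set ℝ) :
    g.measure s ≤ ediam (g '' s) := by
  have hmono : Monotone fun n : ℕ => s ∩ closedBall 0 n := fun m n hmn =>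
    inter_subset_inter_right s (closedBall_subset_closedBall (by exact_mod_cast hmn))
  rw [← iUnion_inter_closedBall_nat s 0, hmono.measure_iUnion, iUnion_inter_closedBall_nat]
  refine iSup_le fun n => ?_
  calc g.measure (s ∩ closedBall 0 n)
    _ ≤ ediam (g '' (s ∩ closedBall 0 n)) :=
      stieltjesMeasure_le_ediam_image_of_isBounded hg
        (isBounded_closedBall.subset inter_subset_right)
    _ ≤ ediam (g '' s) := ediam_mono (image_mono inter_subset_left)

theorem map_stieltjesMeasure_le_volume (hg : Continuous g) : g.measure.map g ≤ volume := by
  rw [← hausdorffMeasure_real]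
  refine Measure.le_hausdorffMeasure 1 _ 1 one_pos fun s _ => ?_
  calc g.measure.map g s
    _ ≤ g.measure.map g (closure s) := measure_mono subset_closure
    _ = g.measure (g ⁻¹' closure s) := Measure.map_apply hg.measurable measurableSet_closure
    _ ≤ ediam (g '' (g ⁻¹' closure s)) := stieltjesMeasure_le_ediam_image hg _
    _ ≤ ediam (closure s) := ediam_mono (image_preimage_subset _ _)
    _ = ediam s ^ (1 : ℝ) := by rw [ediam_closure, ENNReal.rpow_one]

theorem stieltjesMeasure_le_volume_image (hg : Continuous g) (s : Set ℝ) :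
    g.measure s ≤ volume (g '' s) :=
  calc g.measure s
    _ ≤ g.measure (g ⁻¹' (g '' s)) := measure_mono (subset_preimage_image g s)
    _ ≤ g.measure.map g (g '' s) := Measure.le_map_apply hg.aemeasurable _
    _ ≤ volume (g '' s) := map_stieltjesMeasure_le_volume hg _

end Stieltjes

theorem absolutelyContinuousOnInterval_of_eqOn {X : Type*} [PseudoMetricSpace X] {f g : ℝ → X}
    {a b : ℝ} (hg : AbsolutelyContinuousOnInterval g a b) (hfg : EqOn f g (uIcc a b)) :
    AbsolutelyContinuousOnInterval f a b := by
  refine Tendsto.congr' ?_ hg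
  filter_upwards [mem_inf_of_right (mem_principal_self _)] with E hE
  refine Finset.sum_congr rfl fun i hi => ?_
  rw [hfg (hE.1 i hi).1, hfg (hE.1 i hi).2]

theorem absolutelyContinuousOnInterval_of_measure_Ioc {μ : Measure ℝ} [IsFiniteMeasure μ]
    (hμ : μ ≪ volume) {f : ℝ → ℝ} {a b : ℝ} (hab : a ≤ b)
    (hf : ∀ x ∈ Icc a b, μ.real (Ioc a x) = f x - f a) : AbsolutelyContinuousOnInterval f a b := by
  have hint : IntervalIntegrable (fun x => (μ.rnDeriv volume x).toReal) volume a b :=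
    Measure.integrable_toReal_rnDeriv.intervalIntegrable
  refine absolutelyContinuousOnInterval_of_eqOn
    ((hint.absolutelyContinuousOnInterval_intervalIntegral left_mem_uIcc).fun_add
      (LipschitzWith.const (f a)).lipschitzOnWith.absolutelyContinuousOnInterval) fun x hx => ?_
  rw [uIcc_of_le hab] at hx
  rw [intervalIntegral.integral_of_le hx.1, Measure.setIntegral_toReal_rnDeriv hμ, hf x hx,
    sub_add_cancel]

theorem absolutelyContinuousOnInterval_stieltjesFunction {g : StieltjesFunction ℝ}
    (hg : Continuous g) {a b : ℝ} (hab : a ≤ b)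
    (hnull : ∀ s ⊆ Icc a b, volume s = 0 → volume (g '' s) = 0) :
    AbsolutelyContinuousOnInterval g a b := by
  have hac : g.measure.restrict (Icc a b) ≪ volume := by
    intro s hs
    rw [Measure.restrict_apply' measurableSet_Icc, ← nonpos_iff_eq_zero]
    calc g.measure (s ∩ Icc a b)
      _ ≤ volume (g '' (s ∩ Icc a b)) := stieltjesMeasure_le_volume_image hg _
      _ = 0 := hnull _ inter_subset_right (measure_mono_null inter_subset_left hs)
  have : IsFiniteMeasure (g.measure.restrict (Icc a b)) :=
    isFiniteMeasure_restrict.2 isCompact_Icc.measure_ne_top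
  refine absolutelyContinuousOnInterval_of_measure_Ioc hac hab fun x hx => ?_
  have hsub : Ioc a x ⊆ Icc a b := Ioc_subset_Icc_self.trans (Icc_subset_Icc_right hx.2)
  rw [measureReal_restrict_apply measurableSet_Ioc, inter_eq_left.2 hsub, measureReal_def,
    g.measure_Ioc, ENNReal.toReal_ofReal (sub_nonneg.2 (g.mono hx.1))]

theorem exists_continuous_stieltjesFunction_eqOn {f : ℝ → ℝ} {a b : ℝ} (hab : a ≤ b)
    (hcont : ContinuousOn f (Icc a b)) (hmono : MonotoneOn f (Icc a b)) :
    ∃ g : StieltjesFunction ℝ, Continuous g ∧ EqOn f g (Icc a b) := by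
  have hg : Continuous (IccExtend hab ((Icc a b).domRestrict f)) :=
    hcont.domRestrict.Icc_extend'
  have hg_mono : Monotone (IccExtend hab ((Icc a b).domRestrict f)) :=
    (monotoneOn_iff_monotone.1 hmono).IccExtend hab
  exact ⟨⟨_, hg_mono, fun x => hg.continuousWithinAt⟩, hg,
    fun x hx => (IccExtend_of_mem hab ((Icc a b).domRestrict f) hx).symm⟩

/-- The **Banach–Zaretsky theorem** for monotone functions. -/
theorem absolutelyContinuousOnInterval_of_volume_image_eq_zero {f : ℝ → ℝ} {a b : ℝ} (hab : a ≤ b)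
    (hcont : ContinuousOn f (Icc a b)) (hmono : MonotoneOn f (Icc a b))
    (hnull : ∀ s ⊆ Icc a b, volume s = 0 → volume (f '' s) = 0) :
    AbsolutelyContinuousOnInterval f a b := by
  obtain ⟨g, hg, hfg⟩ := exists_continuous_stieltjesFunction_eqOn hab hcont hmono
  have hac : AbsolutelyContinuousOnInterval g a b :=
    absolutelyContinuousOnInterval_stieltjesFunction hg hab fun s hsub hs => by
      rw [← (hfg.mono hsub).image_eq]
      exact hnull s hsub hs
  exact absolutelyContinuousOnInterval_of_eqOn hac (by rwa [uIcc_of_le hab])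

theorem exists_iUnion_lipschitzOnWith_of_isBigO_right {E : Type*} [SeminormedAddCommGroup E]
    {f : ℝ → E} {s : Set ℝ}
    (hf : ∀ x ∈ s, (fun y => f y - f x) =O[𝓝[s ∩ Ioi x] x] fun y => y - x) :
    ∃ t : ℕ → ℚ → Set ℝ, s = ⋃ n, ⋃ q, t n q ∧
      ∀ (n : ℕ) (q : ℚ), LipschitzOnWith n f (t n q) := by
  refine ⟨fun n q => {x ∈ s | x < q ∧ ∀ y ∈ s ∩ Ioo x q, ‖f y - f x‖ ≤ n * ‖y - x‖},
    Subset.antisymm (fun x hx => ?_) (iUnion₂_subset fun n q x hx => hx.1), fun n q => ?_⟩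
  · obtain ⟨C, hC⟩ := (hf x hx).bound
    obtain ⟨n, hn⟩ := exists_nat_ge C
    rw [inter_comm, eventually_iff, nhdsWithin_inter', mem_inf_principal,
      mem_nhdsGT_iff_exists_Ioo_subset] at hC
    obtain ⟨u, hxu, hu⟩ := hC
    obtain ⟨q, hxq, hqu⟩ := exists_rat_btwn (mem_Ioi.1 hxu)
    refine mem_iUnion₂.2 ⟨n, q, hx, hxq, fun y hy => ?_⟩
    calc ‖f y - f x‖
      _ ≤ C * ‖y - x‖ := hu ⟨hy.2.1, hy.2.2.trans hqu⟩ hy.1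
      _ ≤ n * ‖y - x‖ := by gcongr
  · refine LipschitzOnWith.of_dist_le_mul fun x hx y hy => ?_
    wlog hxy : x < y generalizing x y
    · obtain hyx | rfl := (not_lt.1 hxy).lt_or_eq
      · rw [dist_comm, dist_comm x]
        exact this y hy x hx hyx
      · simp only [dist_self, mul_zero, le_refl]
    rw [dist_comm, dist_eq_norm, dist_comm x, dist_eq_norm]
    exact hx.2.2 y ⟨hy.1, hxy, hy.2.1⟩

theorem hausdorffMeasure_image_eq_zero_of_isBigO_right {E : Type*} [NormedAddCommGroup E]
    [MeasurableSpace E] [BorelSpace E] {f : ℝ → E} {s : Set ℝ} {d : ℝ} (hd : 0 ≤ d)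
    (hf : ∀ x ∈ s, (fun y => f y - f x) =O[𝓝[s ∩ Ioi x] x] fun y => y - x)
    (hs : μH[d] s = 0) : μH[d] (f '' s) = 0 := by
  obtain ⟨t, rfl, ht⟩ := exists_iUnion_lipschitzOnWith_of_isBigO_right hf
  simp only [image_iUnion, measure_iUnion_null_iff] at hs ⊢
  intro n q
  refine le_antisymm ?_ bot_le
  simpa [hs n q] using (ht n q).hausdorffMeasure_image_le hd

theorem isBigO_sub_of_limsup_slope_ne_top {f : ℝ → ℝ} {s : Set ℝ} {x : ℝ}
    (hmono : MonotoneOn f s) (hx : x ∈ s)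
    (hf : limsup (fun y => (((f y - f x) / (y - x) : ℝ) : EReal)) (𝓝[s ∩ Ioi x] x) ≠ ⊤) :
    (fun y => f y - f x) =O[𝓝[s ∩ Ioi x] x] fun y => y - x := by
  obtain ⟨C, hC, -⟩ := EReal.lt_iff_exists_real_btwn.1 hf.lt_top
  refine IsBigO.of_bound C ?_
  filter_upwards [eventually_lt_of_limsup_lt hC, self_mem_nhdsWithin] with y hslope ⟨hys, hxy⟩
  have hpos : 0 < y - x := sub_pos.2 hxy
  rw [Real.norm_of_nonneg (sub_nonneg.2 (hmono hx hys hxy.le)), Real.norm_of_nonneg hpos.le,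
    ← div_le_iff₀ hpos]
  exact_mod_cast hslope.le

theorem volume_image_eq_zero_of_limsup_slope_ne_top {f : ℝ → ℝ} {s : Set ℝ}
    (hmono : MonotoneOn f s)
    (hf : ∀ x ∈ s,
      limsup (fun y => (((f y - f x) / (y - x) : ℝ) : EReal)) (𝓝[s ∩ Ioi x] x) ≠ ⊤)
    (hs : volume s = 0) : volume (f '' s) = 0 := by
  rw [← hausdorffMeasure_real] at hs ⊢
  exact hausdorffMeasure_image_eq_zero_of_isBigO_right zero_le_one
    (fun x hx => isBigO_sub_of_limsup_slope_ne_top hmono hx (hf x hx)) hs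

theorem absolutelyContinuousOnInterval_of_limsup_slope_ne_top {f : ℝ → ℝ} {a b : ℝ} (hab : a ≤ b)
    (hcont : ContinuousOn f (Icc a b)) (hmono : MonotoneOn f (Icc a b))
    (hDini : ∀ x ∈ Ico a b,
      limsup (fun y => (((f y - f x) / (y - x) : ℝ) : EReal)) (𝓝[>] x) ≠ ⊤) :
    AbsolutelyContinuousOnInterval f a b := by
  refine absolutelyContinuousOnInterval_of_volume_image_eq_zero hab hcont hmono fun s hsub hs =>
    volume_image_eq_zero_of_limsup_slope_ne_top (hmono.mono hsub) (fun x hx => ?_) hs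
  obtain ⟨hax, hxb⟩ := hsub hx
  obtain hxb | rfl := hxb.lt_or_eq
  · refine ne_top_of_le_ne_top (hDini x ⟨hax, hxb⟩) (limsup_le_limsup_of_le ?_)
    exact nhdsWithin_mono x inter_subset_right
  · have hempty : s ∩ Ioi x = ∅ :=
      disjoint_iff_inter_eq_empty.1 <| disjoint_left.2 fun y hy => not_lt.2 (hsub hy).2
    rw [hempty, nhdsWithin_empty, limsup_bot]
    exact bot_ne_top

theorem mk_mem_disjWithin_of_disjoint_Ioo {a b : ℝ} {m : ℕ} {c d : ℕ → ℝ}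
    (hcd : ∀ i < m, a ≤ c i ∧ c i ≤ d i ∧ d i ≤ b)
    (hdisj : ∀ i < m, ∀ j < m, i ≠ j → Disjoint (Ioo (c i) (d i)) (Ioo (c j) (d j))) :
    (m, fun i => (c i, d i)) ∈ AbsolutelyContinuousOnInterval.disjWithin a b := by
  refine ⟨fun i hi => ?_, fun i hi j hj hij => ?_⟩
  · obtain ⟨hac, hcd, hdb⟩ := hcd i (Finset.mem_range.1 hi)
    exact ⟨mem_uIcc_of_le hac (hcd.trans hdb), mem_uIcc_of_le (hac.trans hcd) hdb⟩
  · rw [Finset.mem_coe, Finset.mem_range] at hi hj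
    simp only [Function.onFun]
    rw [uIoc_of_le (hcd i hi).2.1, uIoc_of_le (hcd j hj).2.1, Ioc_disjoint_Ioc,
      ← Ioo_disjoint_Ioo]
    exact hdisj i hi j hj hij

/-- If `f : [a,b] → ℝ` is continuous and monotonically increasing and its upper right
Dini derivative is a finite real number at every point of `[a,b)`, then `f` is absolutely
continuous on `[a,b]`. -/
theorem stmt_0 (a b : ℝ) (hab : a < b) (f : ℝ → ℝ)
    (hcont : ContinuousOn f (Set.Icc a b))
    (hmono : MonotoneOn f (Set.Icc a b))
    (hDini : ∀ x ∈ Set.Ico a b, ∃ L : ℝ,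
      Filter.limsup (fun y => (((f y - f x) / (y - x) : ℝ) : EReal))
        (nhdsWithin x (Set.Ioi x)) = (L : EReal)) :
    ∀ ε > 0, ∃ δ > 0, ∀ (m : ℕ) (c d : ℕ → ℝ),
      (∀ i < m, a ≤ c i ∧ c i < d i ∧ d i ≤ b) →
      (∀ i < m, ∀ j < m, i ≠ j → Disjoint (Set.Ioo (c i) (d i)) (Set.Ioo (c j) (d j))) →
      (∑ i ∈ Finset.range m, (d i - c i)) < δ →
      (∑ i ∈ Finset.range m, (f (d i) - f (c i))) < ε := by
  have hac : AbsolutelyContinuousOnInterval f a b := by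
    refine absolutelyContinuousOnInterval_of_limsup_slope_ne_top hab.le hcont hmono fun x hx => ?_
    obtain ⟨L, hL⟩ := hDini x hx
    exact hL ▸ EReal.coe_ne_top L
  intro ε hε
  obtain ⟨δ, hδ, hsum_lt⟩ := (absolutelyContinuousOnInterval_iff f a b).1 hac ε hε
  refine ⟨δ, hδ, fun m c d hcd hdisj hsum => ?_⟩
  have hlt {i : ℕ} (hi : i ∈ Finset.range m) : c i < d i := (hcd i (Finset.mem_range.1 hi)).2.1
  have hmem : (m, fun i => (c i, d i)) ∈ AbsolutelyContinuousOnInterval.disjWithin a b :=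
    mk_mem_disjWithin_of_disjoint_Ioo
      (fun i hi => ⟨(hcd i hi).1, (hcd i hi).2.1.le, (hcd i hi).2.2⟩) hdisj
  have hlen : ∑ i ∈ Finset.range m, dist (c i) (d i) < δ := by
    refine hsum.trans_eq' (Finset.sum_congr rfl fun i hi => ?_)
    rw [dist_comm, Real.dist_eq, abs_of_pos (sub_pos.2 (hlt hi))]
  calc ∑ i ∈ Finset.range m, (f (d i) - f (c i))
    _ ≤ ∑ i ∈ Finset.range m, dist (f (c i)) (f (d i)) :=
      Finset.sum_le_sum fun i _ => (Real.sub_le_dist _ _).trans_eq (dist_comm _ _)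
    _ < ε := hsum_lt _ hmem hlen
end

section
/- Let X be a real vector space, φ : X → ℝ a linear functional, (xₙ)_{n∈ℕ} a sequence in X, and x ∈ X. Suppose that for every subsequence (yₙ)_{n∈ℕ} of (xₙ)_{n∈ℕ} one has limsup_{n→∞} φ((1/n) Σ_{m=1}^{n} y_m) ≤ φ(x). Then limsup_{n→∞} φ(xₙ) ≤ φ(x). -/
open Filter

/-!
If `c < limsup φ (x n)`, some subsequence of `φ (x n)` lies entirely above `c`, hence so do all of
its nonempty averages. This bounds the `liminf` of the averages from below, not just the `limsup`.
-/

open scoped BigOperators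

theorem exists_strictMono_forall_lt_of_lt_limsup {α : Type*} [ConditionallyCompleteLinearOrder α]
    {u : ℕ → α} {c : α} (hc : c < limsup u atTop)
    (hu : atTop.IsCoboundedUnder (· ≤ ·) u := by isBoundedDefault) :
    ∃ ns : ℕ → ℕ, StrictMono ns ∧ ∀ k, c < u (ns k) :=
  extraction_of_frequently_atTop (frequently_lt_of_lt_limsup hu hc)

theorem coe_le_liminf_expect_range {a : ℕ → ℝ} {c : ℝ} (ha : ∀ m, c ≤ a m) :
    (c : EReal) ≤ liminf (fun n => ((𝔼 m ∈ Finset.range n, a m : ℝ) : EReal)) atTop := by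
  refine le_liminf_of_le (by isBoundedDefault) ?_
  filter_upwards [eventually_ne_atTop 0] with n hn
  exact EReal.coe_le_coe (Finset.le_expect (Finset.nonempty_range_iff.2 hn) fun m _ => ha m)

theorem map_inv_natCast_smul_sum_range {𝕜 K X : Type*} [DivisionSemiring 𝕜] [Semifield K]
    [CharZero K] [AddCommMonoid X] [Module 𝕜 X] (φ : X →+ K) (x : ℕ → X) (n : ℕ) :
    φ ((n : 𝕜)⁻¹ • ∑ m ∈ Finset.range n, x m) = 𝔼 m ∈ Finset.range n, φ (x m) := by
  rw [map_inv_natCast_smul φ 𝕜 K, map_sum, Finset.expect_eq_sum_div_card, Finset.card_range,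
    smul_eq_mul, inv_mul_eq_div]

theorem stmt_1_general {X : Type*} [AddCommMonoid X] [Module ℝ X] (φ : X →+ ℝ)
    (x : ℕ → X) (b : EReal)
    (h : ∀ ns : ℕ → ℕ, StrictMono ns →
      liminf (fun n : ℕ => ((φ ((n : ℝ)⁻¹ • ∑ m ∈ Finset.range n, x (ns m)) : ℝ) : EReal))
        atTop ≤ b) :
    limsup (fun n => (φ (x n) : EReal)) atTop ≤ b := by
  refine EReal.ge_of_forall_gt_iff_ge.1 fun c hc => ?_
  obtain ⟨ns, hns, hlt⟩ := exists_strictMono_forall_lt_of_lt_limsup hc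
  have hle : ∀ m, c ≤ φ (x (ns m)) := fun m => (EReal.coe_lt_coe_iff.1 (hlt m)).le
  calc (c : EReal)
      ≤ liminf (fun n => ((𝔼 m ∈ Finset.range n, φ (x (ns m)) : ℝ) : EReal)) atTop :=
        coe_le_liminf_expect_range hle
    _ = liminf (fun n : ℕ =>
          ((φ ((n : ℝ)⁻¹ • ∑ m ∈ Finset.range n, x (ns m)) : ℝ) : EReal)) atTop := by
        simp only [map_inv_natCast_smul_sum_range]
    _ ≤ b := h ns hns

/-- If for every subsequence of `x` the `limsup` of `φ` applied to the Cesàro averages is at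
most `φ x₀`, then `limsup φ (x n) ≤ φ x₀`. -/
theorem stmt_1 {X : Type*} [AddCommGroup X] [Module ℝ X] (φ : X →ₗ[ℝ] ℝ)
    (x : ℕ → X) (x₀ : X)
    (h : ∀ ns : ℕ → ℕ, StrictMono ns →
      Filter.limsup
        (fun n : ℕ => ((φ ((n : ℝ)⁻¹ • ∑ m ∈ Finset.range n, x (ns m)) : ℝ) : EReal))
        Filter.atTop ≤ ((φ x₀ : ℝ) : EReal)) :
    Filter.limsup (fun n : ℕ => ((φ (x n) : ℝ) : EReal)) Filter.atTop
      ≤ ((φ x₀ : ℝ) : EReal) :=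
  stmt_1_general φ.toAddMonoidHom x (φ x₀) fun ns hns =>
    (liminf_le_limsup).trans (h ns hns)
end

section
/- Let X be a real vector space and (Bₙ)_{n∈ℕ} a sequence of symmetric, positive semidefinite, bilinear forms on X such that m ≤ n implies B_m(x, x) ≤ Bₙ(x, x) for every x ∈ X. Let Y = {x ∈ X : sup_{n∈ℕ} Bₙ(x, x) < ∞}. Then Y is a linear subspace of X; for all x, y ∈ Y the limit B(x, y) := lim_{n→∞} Bₙ(x, y) exists and equals lim_{n→∞} (1/4)[Bₙ(x + y, x + y) − Bₙ(x − y, x − y)]; and B : Y × Y → ℝ is a symmetric, positive semidefinite, bilinear form on Y. -/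
open Filter

/-!
Monotonicity makes the diagonal values `B i x x` converge as soon as they are bounded, and
polarisation expresses `B i x y` through the diagonal values at `x + y` and `x - y`, so it
converges as well. Boundedness passes to sums by the parallelogram identity, because the
discarded term `B i (x - y) (x - y)` is nonnegative. Linearity, symmetry and nonnegativity are
closed conditions and survive in the limit.
-/

open LinearMap (BilinForm)
open scoped Topology

section Identities

variable {R M : Type*} [CommRing R] [AddCommGroup M] [Module R M]

theorem bilinForm_parallelogram (B : BilinForm R M) (x y : M) :
    B (x + y) (x + y) + B (x - y) (x - y) = 2 * (B x x + B y y) := by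
  simp only [map_add, map_sub, LinearMap.add_apply, LinearMap.sub_apply]
  ring

theorem four_mul_bilinForm_eq_sub {B : BilinForm R M} (hB : B.IsSymm) (x y : M) :
    4 * B x y = B (x + y) (x + y) - B (x - y) (x - y) := by
  simp only [map_add, map_sub, LinearMap.add_apply, LinearMap.sub_apply, hB.eq y x]
  ring

end Identities

theorem bilinForm_eq_polarisation {K V : Type*} [Field K] [NeZero (4 : K)] [AddCommGroup V]
    [Module K V] {B : BilinForm K V} (hB : B.IsSymm) (x y : V) :
    B x y = 1 / 4 * (B (x + y) (x + y) - B (x - y) (x - y)) := by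
  rw [← four_mul_bilinForm_eq_sub hB, one_div, inv_mul_cancel_left₀ four_ne_zero]

/-- The bilinear form given by a symmetric function that is linear in its first argument. -/
def bilinFormOfSymm {R M : Type*} [CommSemiring R] [AddCommMonoid M] [Module R M]
    (b : M → M → R) (hsymm : ∀ x y, b x y = b y x)
    (hadd : ∀ x x' y, b (x + x') y = b x y + b x' y)
    (hsmul : ∀ (c : R) x y, b (c • x) y = c * b x y) : BilinForm R M :=
  LinearMap.mk₂ R b hadd hsmul
    (fun x y y' => by rw [hsymm, hadd, hsymm y, hsymm y'])
    (fun c x y => by rw [hsymm, hsmul, hsymm y, smul_eq_mul])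

section BoundedDiagonal

variable {ι R M : Type*} [CommRing R] [LinearOrder R] [IsOrderedRing R] [AddCommGroup M]
  [Module R M]

/-- The submodule of all `x` whose diagonal values `B i x x` under a family of nonnegative bilinear
forms are bounded above; for an increasing sequence of forms it is the domain of the limit form. -/
def boundedDiagonal (B : ι → BilinForm R M) (hB : ∀ i, (B i).IsNonneg) : Submodule R M where
  carrier := {x | ∃ C, ∀ i, B i x x ≤ C}
  zero_mem' := ⟨0, fun i => by rw [map_zero]⟩
  add_mem' := by
    rintro x y ⟨C, hC⟩ ⟨D, hD⟩
    refine ⟨2 * (C + D), fun i => ?_⟩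
    calc B i (x + y) (x + y)
        ≤ B i (x + y) (x + y) + B i (x - y) (x - y) :=
          le_add_of_nonneg_right ((hB i).nonneg (x - y))
      _ = 2 * (B i x x + B i y y) := bilinForm_parallelogram (B i) x y
      _ ≤ 2 * (C + D) :=
          mul_le_mul_of_nonneg_left (add_le_add (hC i) (hD i)) zero_le_two
  smul_mem' := by
    rintro c x ⟨C, hC⟩
    refine ⟨c ^ 2 * C, fun i => ?_⟩
    calc B i (c • x) (c • x)
        = c ^ 2 * B i x x := by
          rw [BilinForm.smul_left, BilinForm.smul_right, sq, mul_assoc]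
      _ ≤ c ^ 2 * C := mul_le_mul_of_nonneg_left (hC i) (sq_nonneg c)

end BoundedDiagonal

section PointwiseLimit

variable {ι R M : Type*} [CommSemiring R] [TopologicalSpace R] [T2Space R]
  [IsTopologicalSemiring R] [AddCommMonoid M] [Module R M] {l : Filter ι} [l.NeBot]
  {B : ι → BilinForm R M} {b : M → M → R}

/-- The pointwise limit of bilinear forms, as a bilinear form. It is the two-variable analogue of
`linearMapOfTendsto`. -/
def bilinFormOfTendsto (B : ι → BilinForm R M) (b : M → M → R)
    (h : ∀ x y, Tendsto (fun i => B i x y) l (𝓝 (b x y))) : BilinForm R M :=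
  LinearMap.mk₂ R b
    (fun x x' y => tendsto_nhds_unique (h (x + x') y) <| by
      simpa only [BilinForm.add_left] using (h x y).add (h x' y))
    (fun c x y => tendsto_nhds_unique (h (c • x) y) <| by
      simpa only [BilinForm.smul_left, smul_eq_mul] using (h x y).const_mul c)
    (fun x y y' => tendsto_nhds_unique (h x (y + y')) <| by
      simpa only [BilinForm.add_right] using (h x y).add (h x y'))
    (fun c x y => tendsto_nhds_unique (h x (c • y)) <| by
      simpa only [BilinForm.smul_right, smul_eq_mul] using (h x y).const_mul c)

theorem isPosSemidef_bilinFormOfTendsto [Preorder R] [ClosedIciTopology R]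
    (hB : ∀ i, (B i).IsPosSemidef)
    (h : ∀ x y, Tendsto (fun i => B i x y) l (𝓝 (b x y))) :
    (bilinFormOfTendsto B b h).IsPosSemidef where
  eq x y := tendsto_nhds_unique (h x y) <| (h y x).congr fun i => (hB i).eq y x
  nonneg x := ge_of_tendsto' (h x x) fun i => (hB i).nonneg x

end PointwiseLimit

section MonotoneLimit

variable {ι X : Type*} [Preorder ι] [AddCommGroup X] [Module ℝ X] {B : ι → BilinForm ℝ X}

theorem exists_tendsto_diagonal (hB : ∀ i, (B i).IsNonneg) {x : X}
    (hmono : Monotone fun i => B i x x) (hx : x ∈ boundedDiagonal B hB) :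
    ∃ a, Tendsto (fun i => B i x x) atTop (𝓝 a) :=
  let ⟨C, hC⟩ := hx
  ⟨_, tendsto_atTop_ciSup hmono ⟨C, Set.forall_mem_range.2 hC⟩⟩

theorem tendsto_limUnder_of_mem_boundedDiagonal (hB : ∀ i, (B i).IsPosSemidef)
    (hmono : ∀ x, Monotone fun i => B i x x) {x y : X}
    (hx : x ∈ boundedDiagonal B fun i => (hB i).isNonneg)
    (hy : y ∈ boundedDiagonal B fun i => (hB i).isNonneg) :
    Tendsto (fun i => B i x y) atTop (𝓝 (limUnder atTop fun i => B i x y)) := by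
  obtain ⟨a, ha⟩ := exists_tendsto_diagonal _ (hmono _) (add_mem hx hy)
  obtain ⟨b, hb⟩ := exists_tendsto_diagonal _ (hmono _) (sub_mem hx hy)
  refine tendsto_nhds_limUnder ⟨1 / 4 * (a - b), ?_⟩
  exact ((ha.sub hb).const_mul (1 / 4)).congr fun i =>
    (bilinForm_eq_polarisation (hB i).isSymm x y).symm

variable [IsDirectedOrder ι] [Nonempty ι]

/-- The limit of an increasing net of positive semidefinite bilinear forms, as a bilinear form on
the submodule where the diagonal values are bounded. Its values are given by `limUnder`, which is
meaningful there because all the nets `B i x y` converge. -/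
noncomputable def monotoneLimitForm (B : ι → BilinForm ℝ X) (hB : ∀ i, (B i).IsPosSemidef)
    (hmono : ∀ x, Monotone fun i => B i x x) :
    BilinForm ℝ (boundedDiagonal B fun i => (hB i).isNonneg) :=
  bilinFormOfTendsto (fun i => (B i).restrict _)
    (fun x y => limUnder atTop fun i => B i x y)
    (fun x y => tendsto_limUnder_of_mem_boundedDiagonal hB hmono x.2 y.2)

theorem isPosSemidef_monotoneLimitForm (hB : ∀ i, (B i).IsPosSemidef)
    (hmono : ∀ x, Monotone fun i => B i x x) : (monotoneLimitForm B hB hmono).IsPosSemidef :=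
  isPosSemidef_bilinFormOfTendsto (B := fun i => (B i).restrict _)
    (fun i => ⟨⟨fun x y => (hB i).eq x y⟩, ⟨fun x => (hB i).nonneg x⟩⟩) _

end MonotoneLimit

theorem stmt_3_general {ι : Type*} [Preorder ι] [IsDirectedOrder ι] [Nonempty ι]
    {X : Type*} [AddCommGroup X] [Module ℝ X]
    (b : ι → X → X → ℝ)
    (haddl : ∀ i x x' y, b i (x + x') y = b i x y + b i x' y)
    (hsmull : ∀ i (c : ℝ) x y, b i (c • x) y = c * b i x y)
    (hsymm : ∀ i x y, b i x y = b i y x)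
    (hpsd : ∀ i x, 0 ≤ b i x x)
    (hmono : ∀ i j, i ≤ j → ∀ x, b i x x ≤ b j x x)
    (Y : Set X) (hY : Y = {x | ∃ C : ℝ, ∀ i, b i x x ≤ C}) :
    ((0 : X) ∈ Y ∧ (∀ x ∈ Y, ∀ y ∈ Y, x + y ∈ Y) ∧ (∀ (c : ℝ), ∀ x ∈ Y, c • x ∈ Y)) ∧
    ∃ B : X → X → ℝ,
      (∀ x ∈ Y, ∀ y ∈ Y,
        Tendsto (fun i => b i x y) atTop (𝓝 (B x y)) ∧
        Tendsto (fun i => (1 / 4) * (b i (x + y) (x + y) - b i (x - y) (x - y)))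
          atTop (𝓝 (B x y))) ∧
      (∀ x ∈ Y, ∀ y ∈ Y, B x y = B y x) ∧
      (∀ x ∈ Y, 0 ≤ B x x) ∧
      (∀ x ∈ Y, ∀ x' ∈ Y, ∀ y ∈ Y, B (x + x') y = B x y + B x' y) ∧
      (∀ (c : ℝ), ∀ x ∈ Y, ∀ y ∈ Y, B (c • x) y = c * B x y) := by
  let F : ι → BilinForm ℝ X := fun i => bilinFormOfSymm (b i) (hsymm i) (haddl i) (hsmull i)
  have hF : ∀ i, (F i).IsPosSemidef := fun i => ⟨⟨hsymm i⟩, ⟨hpsd i⟩⟩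
  have hFmono : ∀ x, Monotone fun i => F i x x := fun x i j hij => hmono i j hij x
  let W : Submodule ℝ X := boundedDiagonal F fun i => (hF i).isNonneg
  let L : BilinForm ℝ W := monotoneLimitForm F hF hFmono
  have hL : L.IsPosSemidef := isPosSemidef_monotoneLimitForm hF hFmono
  obtain rfl : Y = W := hY
  refine ⟨⟨W.zero_mem, fun x hx y hy => W.add_mem hx hy, fun c x hx => W.smul_mem c hx⟩,
    fun x y => limUnder atTop fun i => b i x y, fun x hx y hy => ?_,
    fun x hx y hy => hL.eq ⟨x, hx⟩ ⟨y, hy⟩,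
    fun x hx => hL.nonneg ⟨x, hx⟩,
    fun x hx x' hx' y hy => L.add_left ⟨x, hx⟩ ⟨x', hx'⟩ ⟨y, hy⟩,
    fun c x hx y hy => L.smul_left c ⟨x, hx⟩ ⟨y, hy⟩⟩
  have hlim := tendsto_limUnder_of_mem_boundedDiagonal hF hFmono hx hy
  exact ⟨hlim, hlim.congr fun i => bilinForm_eq_polarisation (hF i).isSymm x y⟩

/-- A pointwise-on-the-diagonal bounded, monotone sequence of symmetric positive semidefinite
bilinear forms converges on the subspace `Y` of points with bounded diagonal values to a
symmetric positive semidefinite bilinear form, given by the polarisation formula. -/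
theorem stmt_3 {X : Type*} [AddCommGroup X] [Module ℝ X]
    (Bn : ℕ → X → X → ℝ)
    (haddl : ∀ n x x' y, Bn n (x + x') y = Bn n x y + Bn n x' y)
    (hsmull : ∀ n (c : ℝ) x y, Bn n (c • x) y = c * Bn n x y)
    (hsymm : ∀ n x y, Bn n x y = Bn n y x)
    (hpsd : ∀ n x, 0 ≤ Bn n x x)
    (hmono : ∀ m n, m ≤ n → ∀ x, Bn m x x ≤ Bn n x x)
    (Y : Set X) (hY : Y = {x | ∃ C : ℝ, ∀ n, Bn n x x ≤ C}) :
    ((0 : X) ∈ Y ∧ (∀ x ∈ Y, ∀ y ∈ Y, x + y ∈ Y) ∧ (∀ (c : ℝ), ∀ x ∈ Y, c • x ∈ Y)) ∧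
    ∃ B : X → X → ℝ,
      (∀ x ∈ Y, ∀ y ∈ Y,
        Filter.Tendsto (fun n => Bn n x y) Filter.atTop (nhds (B x y)) ∧
        Filter.Tendsto
          (fun n => (1 / 4) * (Bn n (x + y) (x + y) - Bn n (x - y) (x - y)))
          Filter.atTop (nhds (B x y))) ∧
      (∀ x ∈ Y, ∀ y ∈ Y, B x y = B y x) ∧
      (∀ x ∈ Y, 0 ≤ B x x) ∧
      (∀ x ∈ Y, ∀ x' ∈ Y, ∀ y ∈ Y, B (x + x') y = B x y + B x' y) ∧
      (∀ (c : ℝ), ∀ x ∈ Y, ∀ y ∈ Y, B (c • x) y = c * B x y) :=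
  stmt_3_general Bn haddl hsmull hsymm hpsd hmono Y hY
end

section
/- Let μ be a finite measure on a measurable space, (Tₙ)_{n∈ℕ} and T measurable real-valued functions with Tₙ → T in μ-measure, and suppose C := sup_{n∈ℕ} ∫ exp(Tₙ) dμ < ∞. Then exp(T) ∈ L¹(μ) with ∫ exp(T) dμ ≤ C, and for every p > 1 one has exp(T/p) ∈ L¹(μ) and exp(Tₙ/p) → exp(T/p) in L¹(μ); in particular ∫ exp(Tₙ/p) dμ → ∫ exp(T/p) dμ. -/
open Filter MeasureTheory

/-!
Put `f i = exp (T i / p)`. The functions `f i ^ p = exp (T i)` are bounded in `L¹`, so the `f i`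
are bounded in `Lᵖ`. Since `p > 1`, Hölder's inequality on sets of small measure makes them uniformly
integrable, and Vitali's theorem upgrades convergence in measure to convergence in `L¹`. The
exponent `p = 1` is borderline: only Fatou's lemma survives, which bounds `∫ exp T`.
-/

open scoped ENNReal NNReal Topology

section GeneralMeasure

variable {X ι E : Type*} [MeasurableSpace X] {μ : Measure X} [NormedAddCommGroup E]

theorem unifIntegrable_of_eLpNorm_le {f : ι → X → E} {p q : ℝ≥0∞} {C : ℝ≥0} (hpq : p < q)
    (hf : ∀ i, AEStronglyMeasurable (f i) μ) (hC : ∀ i, eLpNorm (f i) q μ ≤ C) :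
    UnifIntegrable f p μ := by
  intro ε hε
  obtain rfl | hp := eq_or_ne p 0
  · exact ⟨1, one_pos, by simp⟩
  set a : ℝ := 1 / p.toReal - 1 / q.toReal
  have ha : 0 < a := by
    have hp_pos : 0 < p.toReal := ENNReal.toReal_pos hp hpq.ne_top
    obtain rfl | hq := eq_or_ne q ∞
    · simpa [a] using hp_pos
    · exact sub_pos.2 (one_div_lt_one_div_of_lt hp_pos (ENNReal.toReal_strict_mono hq hpq))
  have h_small : Tendsto (fun δ : ℝ => C * ENNReal.ofReal δ ^ a) (𝓝[>] 0) (𝓝 0) := by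
    have h_rpow : Tendsto (fun δ : ℝ => ENNReal.ofReal δ ^ a) (𝓝 0) (𝓝 0) := by
      have h_cont : Continuous fun δ : ℝ => ENNReal.ofReal δ ^ a :=
        ENNReal.continuous_rpow_const.comp ENNReal.continuous_ofReal
      simpa [ha] using h_cont.tendsto 0
    simpa using ENNReal.Tendsto.const_mul (h_rpow.mono_left nhdsWithin_le_nhds)
      (Or.inr ENNReal.coe_ne_top)
  obtain ⟨δ, hδ_small, hδ⟩ := ((h_small.eventually_le_const (ENNReal.ofReal_pos.2 hε)).and
    self_mem_nhdsWithin).exists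
  refine ⟨δ, hδ, fun i s hs hμs => ?_⟩
  calc eLpNorm (s.indicator (f i)) p μ
      = eLpNorm (f i) p (μ.restrict s) := eLpNorm_indicator_eq_eLpNorm_restrict hs
    _ ≤ eLpNorm (f i) q (μ.restrict s) * μ.restrict s Set.univ ^ a :=
        eLpNorm_le_eLpNorm_mul_rpow_measure_univ hpq.le (hf i).restrict
    _ ≤ C * ENNReal.ofReal δ ^ a := by
        rw [Measure.restrict_apply_univ]
        gcongr
        exact (eLpNorm_restrict_le _ _ _ _).trans (hC i)
    _ ≤ ENNReal.ofReal ε := hδ_small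

theorem tendsto_integral_norm_sub_of_tendsto_eLpNorm_one {u : Filter ι} {f : ι → X → E}
    {g : X → E} (hf : ∀ i, AEStronglyMeasurable (f i) μ) (hg : AEStronglyMeasurable g μ)
    (hfg : Tendsto (fun i => eLpNorm (f i - g) 1 μ) u (𝓝 0)) :
    Tendsto (fun i => ∫ x, ‖f i x - g x‖ ∂μ) u (𝓝 0) := by
  have h_toReal := (ENNReal.tendsto_toReal ENNReal.zero_ne_top).comp hfg
  refine h_toReal.congr fun i => ?_
  have h_meas := (hf i).sub hg
  rw [Function.comp_apply, toReal_eLpNorm h_meas, lpNorm_one_eq_integral_norm h_meas]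
  rfl

theorem eLpNorm_one_eq_ofReal_integral_norm {f : X → E} (hf : Integrable f μ) :
    eLpNorm f 1 μ = ENNReal.ofReal (∫ x, ‖f x‖ ∂μ) := by
  rw [eLpNorm_one_eq_lintegral_enorm, ofReal_integral_norm_eq_lintegral_enorm hf]

theorem eLpNorm_one_le_ofReal_of_integral_norm_le {f : X → E} {C : ℝ} (hf : Integrable f μ)
    (hC : ∫ x, ‖f x‖ ∂μ ≤ C) : eLpNorm f 1 μ ≤ ENNReal.ofReal C :=
  (eLpNorm_one_eq_ofReal_integral_norm hf).trans_le (ENNReal.ofReal_le_ofReal hC)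

variable {u : Filter ι} [u.NeBot] [u.IsCountablyGenerated] {f : ι → X → E} {g : X → E}

theorem memLp_of_tendstoInMeasure_of_eLpNorm_le {p : ℝ≥0∞} {C : ℝ≥0}
    (hf : ∀ i, AEStronglyMeasurable (f i) μ) (hC : ∀ᶠ i in u, eLpNorm (f i) p μ ≤ C)
    (hfg : TendstoInMeasure μ f u g) : MemLp g p μ :=
  ⟨hfg.aestronglyMeasurable hf,
    (eLpNorm_le_of_tendstoInMeasure hC hfg hf).trans_lt ENNReal.coe_lt_top⟩

theorem integrable_of_tendstoInMeasure_of_integral_norm_le {C : ℝ}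
    (hf : ∀ i, Integrable (f i) μ) (hC : ∀ᶠ i in u, ∫ x, ‖f i x‖ ∂μ ≤ C)
    (hfg : TendstoInMeasure μ f u g) : Integrable g μ :=
  have h_bound : ∀ᶠ i in u, eLpNorm (f i) 1 μ ≤ C.toNNReal :=
    hC.mono fun i hi => eLpNorm_one_le_ofReal_of_integral_norm_le (hf i) hi
  memLp_one_iff_integrable.1
    (memLp_of_tendstoInMeasure_of_eLpNorm_le (fun i => (hf i).1) h_bound hfg)

theorem integral_norm_le_of_tendstoInMeasure {C : ℝ} (hf : ∀ i, Integrable (f i) μ)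
    (hC : ∀ᶠ i in u, ∫ x, ‖f i x‖ ∂μ ≤ C) (hfg : TendstoInMeasure μ f u g) :
    ∫ x, ‖g x‖ ∂μ ≤ C := by
  have hg := integrable_of_tendstoInMeasure_of_integral_norm_le hf hC hfg
  obtain ⟨i, hi⟩ := hC.exists
  have hC_nonneg : 0 ≤ C := (integral_nonneg fun x => norm_nonneg (f i x)).trans hi
  rw [← ENNReal.ofReal_le_ofReal_iff hC_nonneg, ← eLpNorm_one_eq_ofReal_integral_norm hg]
  exact eLpNorm_le_of_tendstoInMeasure
    (hC.mono fun i hi => eLpNorm_one_le_ofReal_of_integral_norm_le (hf i) hi) hfg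
    fun i => (hf i).1

end GeneralMeasure

section FiniteMeasure

variable {X ι : Type*} [MeasurableSpace X] {μ : Measure X} [IsFiniteMeasure μ] {u : Filter ι}
  [u.IsCountablyGenerated]

theorem tendstoInMeasure_continuous_comp {E F : Type*} [PseudoEMetricSpace E]
    [PseudoEMetricSpace F] {φ : E → F} (hφ : Continuous φ) {f : ι → X → E} {g : X → E}
    (hf : ∀ i, AEStronglyMeasurable (f i) μ) (hfg : TendstoInMeasure μ f u g) :
    TendstoInMeasure μ (fun i x => φ (f i x)) u (fun x => φ (g x)) := by
  intro ε hε
  refine tendsto_of_subseq_tendsto fun ns hns => ?_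
  obtain ⟨ms, -, h_ae⟩ := (hfg.comp hns).exists_seq_tendsto_ae
  exact ⟨ms, tendstoInMeasure_of_tendsto_ae
    (fun k => hφ.comp_aestronglyMeasurable (hf (ns (ms k))))
    (h_ae.mono fun x hx => (hφ.tendsto (g x)).comp hx) ε hε⟩

variable {E : Type*} [NormedAddCommGroup E] {f : ι → X → E} {g : X → E} {p q : ℝ≥0∞}

theorem tendsto_eLpNorm_sub_of_tendstoInMeasure_of_unifIntegrable (hp : 1 ≤ p) (hp_top : p ≠ ∞)
    (hf : ∀ i, AEStronglyMeasurable (f i) μ) (hg : MemLp g p μ) (hui : UnifIntegrable f p μ)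
    (hfg : TendstoInMeasure μ f u g) :
    Tendsto (fun i => eLpNorm (f i - g) p μ) u (𝓝 0) := by
  refine tendsto_of_seq_tendsto fun ns hns => ?_
  have hui_seq : UnifIntegrable (fun n => f (ns n)) p μ := fun ε hε =>
    let ⟨δ, hδ, h⟩ := hui hε
    ⟨δ, hδ, fun n => h (ns n)⟩
  exact tendsto_Lp_finite_of_tendstoInMeasure hp hp_top (fun n => hf (ns n)) hg hui_seq
    (hfg.comp hns)

theorem tendsto_eLpNorm_sub_of_tendstoInMeasure_of_eLpNorm_le [u.NeBot] {C : ℝ≥0} (hp : 1 ≤ p)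
    (hpq : p < q) (hf : ∀ i, AEStronglyMeasurable (f i) μ) (hC : ∀ i, eLpNorm (f i) q μ ≤ C)
    (hfg : TendstoInMeasure μ f u g) :
    Tendsto (fun i => eLpNorm (f i - g) p μ) u (𝓝 0) :=
  have hg : MemLp g q μ := memLp_of_tendstoInMeasure_of_eLpNorm_le hf (.of_forall hC) hfg
  tendsto_eLpNorm_sub_of_tendstoInMeasure_of_unifIntegrable hp hpq.ne_top hf
    (hg.mono_exponent hpq.le) (unifIntegrable_of_eLpNorm_le hpq hf hC) hfg

end FiniteMeasure

theorem eLpNorm_exp_div {X : Type*} [MeasurableSpace X] {μ : Measure X} (S : X → ℝ) {p : ℝ}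
    (hp : 0 < p) :
    eLpNorm (fun x => Real.exp (S x / p)) (ENNReal.ofReal p) μ =
      eLpNorm (fun x => Real.exp (S x)) 1 μ ^ (1 / p) := by
  have h_exponent : ENNReal.ofReal p * ENNReal.ofReal (1 / p) = 1 := by
    rw [← ENNReal.ofReal_mul hp.le, mul_one_div_cancel hp.ne', ENNReal.ofReal_one]
  rw [← h_exponent, ← eLpNorm_norm_rpow _ (one_div_pos.2 hp)]
  simp only [Real.norm_of_nonneg (Real.exp_pos _).le, ← Real.exp_mul, mul_one_div]

theorem exists_forall_eLpNorm_exp_div_le {X ι : Type*} [MeasurableSpace X] {μ : Measure X}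
    {S : ι → X → ℝ} (hint : ∀ i, Integrable (fun x => Real.exp (S i x)) μ)
    (hbdd : BddAbove (Set.range fun i => ∫ x, Real.exp (S i x) ∂μ)) {p : ℝ} (hp : 0 < p) :
    ∃ C : ℝ≥0, ∀ i, eLpNorm (fun x => Real.exp (S i x / p)) (ENNReal.ofReal p) μ ≤ C := by
  obtain ⟨C, hC⟩ := hbdd
  refine ⟨C.toNNReal ^ (1 / p), fun i => ?_⟩
  have h_one : eLpNorm (fun x => Real.exp (S i x)) 1 μ ≤ C.toNNReal := by
    refine eLpNorm_one_le_ofReal_of_integral_norm_le (hint i) ?_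
    simpa only [Real.norm_of_nonneg (Real.exp_pos _).le] using hC ⟨i, rfl⟩
  rw [eLpNorm_exp_div _ hp, ENNReal.coe_rpow_of_nonneg _ (one_div_pos.2 hp).le]
  gcongr

theorem stmt_11_general {X ι : Type*} [MeasurableSpace X] (μ : Measure X) [IsFiniteMeasure μ]
    {u : Filter ι} [u.NeBot] [u.IsCountablyGenerated] (Tn : ι → X → ℝ) (T : X → ℝ)
    (hconv : TendstoInMeasure μ Tn u T)
    (hint : ∀ i, Integrable (fun x => Real.exp (Tn i x)) μ)
    (hbdd : BddAbove (Set.range fun i => ∫ x, Real.exp (Tn i x) ∂μ)) :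
    Integrable (fun x => Real.exp (T x)) μ ∧
    (∫ x, Real.exp (T x) ∂μ) ≤ (⨆ i, ∫ x, Real.exp (Tn i x) ∂μ) ∧
    ∀ p : ℝ, 1 < p →
      Integrable (fun x => Real.exp (T x / p)) μ ∧
      Tendsto (fun i => ∫ x, |Real.exp (Tn i x / p) - Real.exp (T x / p)| ∂μ) u (𝓝 0) ∧
      Tendsto (fun i => ∫ x, Real.exp (Tn i x / p) ∂μ) u (𝓝 (∫ x, Real.exp (T x / p) ∂μ)) := by
  have hTn : ∀ i, AEStronglyMeasurable (Tn i) μ := fun i => by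
    simpa only [Real.log_exp] using (hint i).aemeasurable.log.aestronglyMeasurable
  have h_exp := tendstoInMeasure_continuous_comp Real.continuous_exp hTn hconv
  have h_sup : ∀ i, ∫ x, ‖Real.exp (Tn i x)‖ ∂μ ≤ ⨆ i, ∫ x, Real.exp (Tn i x) ∂μ := fun i => by
    simpa only [Real.norm_of_nonneg (Real.exp_pos _).le] using le_ciSup hbdd i
  refine ⟨integrable_of_tendstoInMeasure_of_integral_norm_le hint (.of_forall h_sup) h_exp, ?_,
    fun p hp => ?_⟩
  · simpa only [Real.norm_of_nonneg (Real.exp_pos _).le] using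
      integral_norm_le_of_tendstoInMeasure hint (.of_forall h_sup) h_exp
  have hp_lt : 1 < ENNReal.ofReal p := ENNReal.one_lt_ofReal.2 hp
  have h_cont : Continuous fun t : ℝ => Real.exp (t / p) := by fun_prop
  have h_meas i := h_cont.comp_aestronglyMeasurable (hTn i)
  have h_exp_div := tendstoInMeasure_continuous_comp h_cont hTn hconv
  obtain ⟨C, hC⟩ := exists_forall_eLpNorm_exp_div_le hint hbdd (one_pos.trans hp)
  have h_int i := MemLp.integrable hp_lt.le ⟨h_meas i, (hC i).trans_lt ENNReal.coe_lt_top⟩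
  have h_int_lim : Integrable (fun x => Real.exp (T x / p)) μ :=
    (memLp_of_tendstoInMeasure_of_eLpNorm_le h_meas (.of_forall hC) h_exp_div).integrable hp_lt.le
  have h_L1 :=
    tendsto_eLpNorm_sub_of_tendstoInMeasure_of_eLpNorm_le le_rfl hp_lt h_meas hC h_exp_div
  exact ⟨h_int_lim, tendsto_integral_norm_sub_of_tendsto_eLpNorm_one h_meas h_int_lim.1 h_L1,
    tendsto_integral_of_L1' _ h_int_lim.1 (.of_forall h_int) h_L1⟩

/-- If `Tₙ → T` in measure and `C = sup_n ∫ exp Tₙ dμ < ∞`, then `exp T ∈ L¹(μ)` with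
`∫ exp T dμ ≤ C`, and for every `p > 1`, `exp (T/p) ∈ L¹(μ)` and `exp (Tₙ/p) → exp (T/p)`
in `L¹(μ)`; in particular the integrals converge. -/
theorem stmt_11 {X : Type*} [MeasurableSpace X] (μ : Measure X) [IsFiniteMeasure μ]
    (Tn : ℕ → X → ℝ) (T : X → ℝ)
    (hTn : ∀ n, Measurable (Tn n)) (hT : Measurable T)
    (hconv : TendstoInMeasure μ Tn Filter.atTop T)
    (hint : ∀ n, Integrable (fun x => Real.exp (Tn n x)) μ)
    (hbdd : BddAbove (Set.range fun n => ∫ x, Real.exp (Tn n x) ∂μ)) :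
    Integrable (fun x => Real.exp (T x)) μ ∧
    (∫ x, Real.exp (T x) ∂μ) ≤ (⨆ n, ∫ x, Real.exp (Tn n x) ∂μ) ∧
    ∀ p : ℝ, 1 < p →
      Integrable (fun x => Real.exp (T x / p)) μ ∧
      Filter.Tendsto (fun n => ∫ x, |Real.exp (Tn n x / p) - Real.exp (T x / p)| ∂μ)
        Filter.atTop (nhds 0) ∧
      Filter.Tendsto (fun n => ∫ x, Real.exp (Tn n x / p) ∂μ)
        Filter.atTop (nhds (∫ x, Real.exp (T x / p) ∂μ)) :=
  stmt_11_general μ Tn T hconv hint hbdd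
end

section
/- Let μ be a probability measure on a measurable space X and let Y ⊆ L¹(μ) be a linear subspace such that exp(|S|) ∈ L¹(μ) for every S ∈ Y. Let T ∈ L¹(μ) with ∫ exp(T) dμ < ∞, let Z be the linear span of {T} ∪ Y, and let α : Z → ℝ be a linear functional satisfying the subgradient inequality α(R − T) ≤ ln ∫ exp(R) dμ − ln ∫ exp(T) dμ for every R ∈ Z (where ln ∫ exp(R) dμ ∈ (−∞, ∞]). Then T·exp(T) ∈ L¹(μ) and α(T) ≥ (∫ T·exp(T) dμ)/(∫ exp(T) dμ); moreover, for every S ∈ Y one has S·exp(T) ∈ L¹(μ) and α(S) = (∫ S·exp(T) dμ)/(∫ exp(T) dμ). -/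
open Filter MeasureTheory

/-!
Let `ν = e^T μ / ∫ e^T dμ` be the tilted measure. For `U = R - T` one has
`ln ∫ e^(T + tU) dμ - ln ∫ e^T dμ = ln ∫ e^(tU) dν`, so the subgradient inequality along the segment
from `T` to `R` reads `t α(U) ≤ cgf U ν t` for `0 < t < 1`. As `ln m ≤ m - 1`, this bounds `α(U)` by
the `ν`-integrals of the difference quotients `(e^(tU) - 1) / t`, which by convexity are dominated
from above by `e^U - 1` and converge to `U` as `t → 0`. Fatou's lemma thus yields both `U ∈ L¹(ν)`
and `α(U) ≤ ∫ U dν`. Taking `R = 0` gives the claim about `T`, and taking `R = cS` with `c` ranging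
over all of `ℝ` turns the inequality into an equality for `S`.
-/

section

open ProbabilityTheory

variable {X : Type*} [MeasurableSpace X] {μ : Measure X}

theorem eq_zero_of_forall_mul_le {𝕜 : Type*} [Field 𝕜] [LinearOrder 𝕜] [IsStrictOrderedRing 𝕜]
    {a b : 𝕜} (h : ∀ c, c * a ≤ b) : a = 0 := by
  by_contra ha
  have hlt : b < (b + 1) / a * a := by simp only [div_mul_cancel₀ _ ha, lt_add_one]
  exact hlt.not_ge (h _)

theorem exp_mul_sub_one_div_le {t : ℝ} (ht₀ : 0 < t) (ht₁ : t ≤ 1) (u : ℝ) :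
    (Real.exp (t * u) - 1) / t ≤ Real.exp u - 1 := by
  have hconv := convexOn_exp.2 (Set.mem_univ 0) (Set.mem_univ u) (sub_nonneg.2 ht₁) ht₀.le
    (sub_add_cancel 1 t)
  simp only [smul_eq_mul, mul_zero, zero_add, Real.exp_zero, mul_one] at hconv
  rw [div_le_iff₀ ht₀]
  linarith

theorem tendsto_exp_mul_sub_one_div (u : ℝ) :
    Tendsto (fun t : ℝ => (Real.exp (t * u) - 1) / t) (nhdsWithin 0 (Set.Ioi 0)) (nhds u) := by
  have hderiv : HasDerivAt (fun t : ℝ => Real.exp (t * u)) u 0 := by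
    simpa using ((hasDerivAt_id (0 : ℝ)).mul_const u).exp
  simpa [div_eq_inv_mul] using hderiv.tendsto_slope_zero_right

theorem integrable_exp_of_integrable_exp_abs {f : X → ℝ} (hf : AEStronglyMeasurable f μ)
    (hexp : Integrable (fun x => Real.exp |f x|) μ) : Integrable (fun x => Real.exp (f x)) μ :=
  hexp.mono' (Real.continuous_exp.comp_aestronglyMeasurable hf) <| .of_forall fun x => by
    simpa only [Real.norm_eq_abs, Real.abs_exp, Real.exp_le_exp] using le_abs_self (f x)

section Fatou

variable {F : ℕ → X → ℝ} {f : X → ℝ} {c : ℝ}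

theorem integrable_and_integral_le_of_tendsto_of_nonneg (hF : ∀ n, Integrable (F n) μ)
    (hF_nonneg : ∀ n, 0 ≤ᵐ[μ] F n) (hFc : ∀ n, ∫ x, F n x ∂μ ≤ c)
    (hlim : ∀ᵐ x ∂μ, Tendsto (fun n => F n x) atTop (nhds (f x))) :
    Integrable f μ ∧ ∫ x, f x ∂μ ≤ c := by
  have hc : 0 ≤ c := (integral_nonneg_of_ae (hF_nonneg 0)).trans (hFc 0)
  have hf_nonneg : 0 ≤ᵐ[μ] f := by
    filter_upwards [hlim, ae_all_iff.2 hF_nonneg] with x hx hx_nonneg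
    exact ge_of_tendsto' hx hx_nonneg
  have hfatou : ∫⁻ x, ENNReal.ofReal (f x) ∂μ ≤ ENNReal.ofReal c :=
    calc ∫⁻ x, ENNReal.ofReal (f x) ∂μ
        = ∫⁻ x, liminf (fun n => ENNReal.ofReal (F n x)) atTop ∂μ := by
          refine lintegral_congr_ae ?_
          filter_upwards [hlim] with x hx using (ENNReal.tendsto_ofReal hx).liminf_eq.symm
      _ ≤ liminf (fun n => ∫⁻ x, ENNReal.ofReal (F n x) ∂μ) atTop :=
          lintegral_liminf_le' fun n => (hF n).aemeasurable.ennreal_ofReal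
      _ ≤ ENNReal.ofReal c := by
          refine liminf_le_of_frequently_le' (Frequently.of_forall fun n => ?_)
          rw [← ofReal_integral_eq_lintegral_ofReal (hF n) (hF_nonneg n)]
          exact ENNReal.ofReal_le_ofReal (hFc n)
  have hf : Integrable f μ :=
    ⟨aestronglyMeasurable_of_tendsto_ae atTop (fun n => (hF n).1) hlim,
      (hasFiniteIntegral_iff_ofReal hf_nonneg).2 (hfatou.trans_lt ENNReal.ofReal_lt_top)⟩
  rw [← ofReal_integral_eq_lintegral_ofReal hf hf_nonneg] at hfatou
  exact ⟨hf, (ENNReal.ofReal_le_ofReal_iff hc).1 hfatou⟩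

theorem integrable_and_le_integral_of_tendsto_of_le {g : X → ℝ} (hg : Integrable g μ)
    (hF : ∀ n, Integrable (F n) μ) (hFg : ∀ n, F n ≤ᵐ[μ] g) (hcF : ∀ n, c ≤ ∫ x, F n x ∂μ)
    (hlim : ∀ᵐ x ∂μ, Tendsto (fun n => F n x) atTop (nhds (f x))) :
    Integrable f μ ∧ c ≤ ∫ x, f x ∂μ := by
  obtain ⟨hgf, hle⟩ : Integrable (fun x => g x - f x) μ ∧
      ∫ x, (g x - f x) ∂μ ≤ ∫ x, g x ∂μ - c := by
    refine integrable_and_integral_le_of_tendsto_of_nonneg (fun n => hg.sub (hF n))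
      (fun n => ?_) (fun n => ?_) ?_
    · filter_upwards [hFg n] with x hx using sub_nonneg.2 hx
    · exact (integral_sub hg (hF n)).trans_le (sub_le_sub_left (hcF n) _)
    · filter_upwards [hlim] with x hx using hx.const_sub (g x)
  have hf : Integrable f μ := by simpa only [Pi.sub_def, sub_sub_cancel] using hg.sub hgf
  rw [integral_sub hg hf] at hle
  exact ⟨hf, (sub_le_sub_iff_left _).1 hle⟩

end Fatou

theorem le_integral_exp_mul_sub_one_div_of_mul_le_cgf [IsProbabilityMeasure μ] {U : X → ℝ}
    {a t : ℝ} (ht : 0 < t) (hU : Integrable (fun x => Real.exp (t * U x)) μ)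
    (ha : t * a ≤ cgf U μ t) :
    a ≤ ∫ x, (Real.exp (t * U x) - 1) / t ∂μ := by
  have hmgf : t * a ≤ mgf U μ t - 1 :=
    ha.trans (Real.log_le_sub_one_of_pos (mgf_pos hU))
  rw [integral_div, integral_sub hU (integrable_const 1), le_div_iff₀' ht]
  simpa [mgf] using hmgf

theorem integrable_and_le_integral_of_forall_mul_le_cgf [IsProbabilityMeasure μ] {U : X → ℝ}
    {a : ℝ} (hU : Integrable (fun x => Real.exp (U x)) μ)
    (ha : ∀ t ∈ Set.Ioo (0 : ℝ) 1, t * a ≤ cgf U μ t) :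
    Integrable U μ ∧ a ≤ ∫ x, U x ∂μ := by
  obtain ⟨t, -, ht, ht_lim⟩ := exists_seq_strictAnti_tendsto' (zero_lt_one (α := ℝ))
  have ht_right : Tendsto t atTop (nhdsWithin 0 (Set.Ioi 0)) :=
    tendsto_nhdsWithin_iff.2 ⟨ht_lim, .of_forall fun n => (ht n).1⟩
  have hexp n : Integrable (fun x => Real.exp (t n * U x)) μ :=
    integrable_exp_mul_of_le_of_le (a := 0) (b := 1)
      (by simp) (by simpa using hU) (ht n).1.le (ht n).2.le
  exact integrable_and_le_integral_of_tendsto_of_le (hU.sub (integrable_const 1))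
    (fun n => ((hexp n).sub (integrable_const 1)).div_const (t n))
    (fun n => .of_forall fun x => exp_mul_sub_one_div_le (ht n).1 (ht n).2.le (U x))
    (fun n => le_integral_exp_mul_sub_one_div_of_mul_le_cgf (ht n).1 (hexp n) (ha _ (ht n)))
    (.of_forall fun x => (tendsto_exp_mul_sub_one_div (U x)).comp ht_right)

section Tilted

variable {f : X → ℝ}

theorem integral_tilted_eq_div (f g : X → ℝ) :
    ∫ x, g x ∂(μ.tilted f) = (∫ x, g x * Real.exp (f x) ∂μ) / ∫ x, Real.exp (f x) ∂μ := by
  rw [integral_tilted, ← integral_div]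
  simp only [smul_eq_mul, div_mul_eq_mul_div, mul_comm (Real.exp _)]

theorem integrable_tilted_iff_integrable_mul_exp (hf : Integrable (fun x => Real.exp (f x)) μ)
    (g : X → ℝ) : Integrable g (μ.tilted f) ↔ Integrable (fun x => g x * Real.exp (f x)) μ := by
  simp only [integrable_tilted_iff hf, smul_eq_mul, mul_comm]

theorem integrable_exp_tilted_iff (hf : Integrable (fun x => Real.exp (f x)) μ) (g : X → ℝ) :
    Integrable (fun x => Real.exp (g x)) (μ.tilted f) ↔
      Integrable (fun x => Real.exp (f x + g x)) μ := by
  simp only [integrable_tilted_iff hf, smul_eq_mul, Real.exp_add]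

theorem cgf_tilted [NeZero μ] (hf : Integrable (fun x => Real.exp (f x)) μ) {U : X → ℝ} {t : ℝ}
    (hU : Integrable (fun x => Real.exp (f x + t * U x)) μ) :
    cgf U (μ.tilted f) t =
      Real.log (∫ x, Real.exp (f x + t * U x) ∂μ) - Real.log (∫ x, Real.exp (f x) ∂μ) := by
  rw [cgf, mgf, integral_exp_tilted,
    ← Real.log_div (integral_exp_pos hU).ne' (integral_exp_pos hf).ne']
  rfl

end Tilted

/-- `α` is a subgradient at `T` of the functional `R ↦ ln ∫ exp R dμ` on `Z`. The functional takes
the value `∞` where `exp R` is not integrable, so such `R` impose no condition. -/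
def IsLogIntegralExpSubgradient (μ : Measure X) {Z : Submodule ℝ (X → ℝ)} (α : Z →ₗ[ℝ] ℝ)
    (T : Z) : Prop :=
  ∀ R : Z, Integrable (fun x => Real.exp ((R : X → ℝ) x)) μ →
    α (R - T) ≤ Real.log (∫ x, Real.exp ((R : X → ℝ) x) ∂μ) -
      Real.log (∫ x, Real.exp ((T : X → ℝ) x) ∂μ)

namespace IsLogIntegralExpSubgradient

variable [NeZero μ] {Z : Submodule ℝ (X → ℝ)} {α : Z →ₗ[ℝ] ℝ} {T : Z}

theorem integrable_sub_and_apply_sub_le (hα : IsLogIntegralExpSubgradient μ α T)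
    (hT : Integrable (fun x => Real.exp ((T : X → ℝ) x)) μ) {R : Z}
    (hR : Integrable (fun x => Real.exp ((R : X → ℝ) x)) μ) :
    Integrable (fun x => (R : X → ℝ) x - (T : X → ℝ) x) (μ.tilted T) ∧
      α (R - T) ≤ ∫ x, ((R : X → ℝ) x - (T : X → ℝ) x) ∂(μ.tilted T) := by
  have : IsProbabilityMeasure (μ.tilted T) := isProbabilityMeasure_tilted hT
  have hexp : Integrable (fun x => Real.exp ((R : X → ℝ) x - (T : X → ℝ) x)) (μ.tilted T) := by
    simpa only [integrable_exp_tilted_iff hT, add_sub_cancel] using hR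
  refine integrable_and_le_integral_of_forall_mul_le_cgf hexp fun t ht => ?_
  have hsegment : Integrable
      (fun x => Real.exp ((T : X → ℝ) x + t * ((R : X → ℝ) x - (T : X → ℝ) x))) μ := by
    rw [← integrable_exp_tilted_iff hT]
    exact integrable_exp_mul_of_le_of_le (a := 0) (b := 1)
      (by simp) (by simpa using hexp) ht.1.le ht.2.le
  calc t * α (R - T)
      = α (T + t • (R - T) - T) := by rw [add_sub_cancel_left, map_smul, smul_eq_mul]
    _ ≤ _ := hα (T + t • (R - T)) hsegment
    _ = _ := (cgf_tilted hT hsegment).symm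

theorem integrable_self_and_integral_le [IsFiniteMeasure μ]
    (hα : IsLogIntegralExpSubgradient μ α T)
    (hT : Integrable (fun x => Real.exp ((T : X → ℝ) x)) μ) :
    Integrable (T : X → ℝ) (μ.tilted T) ∧ ∫ x, (T : X → ℝ) x ∂(μ.tilted T) ≤ α T := by
  obtain ⟨hint, hle⟩ := hα.integrable_sub_and_apply_sub_le hT (R := 0) (by simp)
  simp only [ZeroMemClass.coe_zero, Pi.zero_apply, zero_sub, map_neg, integral_neg,
    neg_le_neg_iff] at hint hle
  exact ⟨integrable_neg_iff.1 hint, hle⟩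

theorem integrable_and_apply_eq_integral (hα : IsLogIntegralExpSubgradient μ α T)
    (hT : Integrable (fun x => Real.exp ((T : X → ℝ) x)) μ) {S : Z}
    (hS : ∀ c : ℝ, Integrable (fun x => Real.exp (c * (S : X → ℝ) x)) μ) :
    Integrable (S : X → ℝ) (μ.tilted T) ∧ α S = ∫ x, (S : X → ℝ) x ∂(μ.tilted T) := by
  have : IsFiniteMeasure μ :=
    (integrable_const_iff_isFiniteMeasure one_ne_zero).1 (by simpa using hS 0)
  have hT_int := (hα.integrable_self_and_integral_le hT).1
  have hS_int : Integrable (S : X → ℝ) (μ.tilted T) := by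
    have hsub := (hα.integrable_sub_and_apply_sub_le hT (R := S) (by simpa using hS 1)).1
    simpa only [Pi.add_def, sub_add_cancel] using hsub.add hT_int
  have hline (c : ℝ) : c * (α S - ∫ x, (S : X → ℝ) x ∂(μ.tilted T)) ≤
      α T - ∫ x, (T : X → ℝ) x ∂(μ.tilted T) := by
    have hle := (hα.integrable_sub_and_apply_sub_le hT (R := c • S) (hS c)).2
    simp only [Submodule.coe_smul, Pi.smul_apply, smul_eq_mul, map_sub, map_smul] at hle
    rw [integral_sub (hS_int.const_mul c) hT_int, integral_const_mul] at hle
    linarith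
  exact ⟨hS_int, sub_eq_zero.1 (eq_zero_of_forall_mul_le hline)⟩

end IsLogIntegralExpSubgradient

end

theorem stmt_13_general {X : Type*} [MeasurableSpace X] (μ : Measure X) [NeZero μ]
    (Y : Submodule ℝ (X → ℝ)) (hYexp : ∀ S ∈ Y, Integrable (fun x => Real.exp (S x)) μ)
    (T : X → ℝ) (hexpT : Integrable (fun x => Real.exp (T x)) μ)
    (Z : Submodule ℝ (X → ℝ)) (hTZ : T ∈ Z) (hYZ : ∀ S ∈ Y, S ∈ Z)
    (α : Z →ₗ[ℝ] ℝ) (hα : IsLogIntegralExpSubgradient μ α ⟨T, hTZ⟩) :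
    (Integrable (fun x => T x * Real.exp (T x)) μ ∧
      (∫ x, T x * Real.exp (T x) ∂μ) / (∫ x, Real.exp (T x) ∂μ) ≤ α ⟨T, hTZ⟩) ∧
    ∀ S : X → ℝ, ∀ hS : S ∈ Y,
      Integrable (fun x => S x * Real.exp (T x)) μ ∧
      α ⟨S, hYZ S hS⟩ = (∫ x, S x * Real.exp (T x) ∂μ) / (∫ x, Real.exp (T x) ∂μ) := by
  have : IsFiniteMeasure μ :=
    (integrable_const_iff_isFiniteMeasure one_ne_zero).1 (by simpa using hYexp 0 Y.zero_mem)
  simp only [← integrable_tilted_iff_integrable_mul_exp hexpT, ← integral_tilted_eq_div]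
  exact ⟨hα.integrable_self_and_integral_le hexpT, fun S hS =>
    hα.integrable_and_apply_eq_integral (S := ⟨S, hYZ S hS⟩) hexpT fun c =>
      hYexp (c • S) (Y.smul_mem c hS)⟩

/-- A subgradient `α` at `T` of the convex functional `R ↦ ln ∫ exp R dμ` on the span `Z`
of `{T} ∪ Y` satisfies `α T ≥ (∫ T e^T dμ)/(∫ e^T dμ)` and, for every `S ∈ Y`,
`α S = (∫ S e^T dμ)/(∫ e^T dμ)`. -/
theorem stmt_13 {X : Type*} [MeasurableSpace X] (μ : Measure X) [IsProbabilityMeasure μ]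
    (Y : Submodule ℝ (X → ℝ))
    (hYL1 : ∀ S ∈ Y, Integrable S μ)
    (hYexp : ∀ S ∈ Y, Integrable (fun x => Real.exp |S x|) μ)
    (T : X → ℝ) (hTint : Integrable T μ)
    (hexpT : Integrable (fun x => Real.exp (T x)) μ)
    (Z : Submodule ℝ (X → ℝ))
    (hZ : Z = Submodule.span ℝ (insert T (Y : Set (X → ℝ))))
    (hTZ : T ∈ Z) (hYZ : ∀ S ∈ Y, S ∈ Z)
    (α : Z →ₗ[ℝ] ℝ)
    (hα : ∀ R : Z, Integrable (fun x => Real.exp ((R : X → ℝ) x)) μ →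
      α (R - ⟨T, hTZ⟩) ≤
        Real.log (∫ x, Real.exp ((R : X → ℝ) x) ∂μ) -
          Real.log (∫ x, Real.exp (T x) ∂μ)) :
    (Integrable (fun x => T x * Real.exp (T x)) μ ∧
      (∫ x, T x * Real.exp (T x) ∂μ) / (∫ x, Real.exp (T x) ∂μ) ≤ α ⟨T, hTZ⟩) ∧
    ∀ S : X → ℝ, ∀ hS : S ∈ Y,
      Integrable (fun x => S x * Real.exp (T x)) μ ∧
      α ⟨S, hYZ S hS⟩ = (∫ x, S x * Real.exp (T x) ∂μ) / (∫ x, Real.exp (T x) ∂μ) :=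
  stmt_13_general μ Y (fun S hS => integrable_exp_of_integrable_exp_abs (hYL1 S hS).1 (hYexp S hS))
    T hexpT Z hTZ hYZ α hα
end

section
/- Let μ be a probability measure on a measurable space and let S, S' be measurable real-valued functions with exp(S) ∈ L¹(μ) and exp(S') ∈ L¹(μ). Define f : [0, 1] → ℝ by f(t) = ln ∫ exp((1 − t)·S + t·S') dμ. Then f is real-valued and convex on [0, 1]; and if there exist 0 ≤ t₀ < t₁ ≤ 1 with f((t₀ + t₁)/2) = (f(t₀) + f(t₁))/2 (i.e. f fails to be strictly convex), then S' − S is μ-almost everywhere equal to a constant. -/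
open Filter MeasureTheory

/-!
Normalise two functions `u`, `v` by subtracting the constants that make `∫ exp u = ∫ exp v = 1`.
The pointwise bound `exp (a u + b v) ≤ a exp u + b exp v` then integrates to
`∫ exp (a u + b v) ≤ 1`, which is the convexity of `u ↦ log ∫ exp u`. Equality of the integrals
forces equality in the pointwise bound almost everywhere, hence `u = v` almost everywhere by
strict convexity of `exp`.
-/

section ConvexIntegrand

variable {X E : Type*} [MeasurableSpace X] {μ : Measure X} [AddCommGroup E] [Module ℝ E]
  {s : Set E} {φ : E → ℝ} {u v : X → E} {a b : ℝ}

theorem integral_comp_convexCombo_le (hφ : ConvexOn ℝ s φ)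
    (hus : ∀ᵐ x ∂μ, u x ∈ s) (hvs : ∀ᵐ x ∂μ, v x ∈ s)
    (hu : Integrable (fun x => φ (u x)) μ) (hv : Integrable (fun x => φ (v x)) μ)
    (ha : 0 ≤ a) (hb : 0 ≤ b) (hab : a + b = 1)
    (huv : Integrable (fun x => φ (a • u x + b • v x)) μ) :
    ∫ x, φ (a • u x + b • v x) ∂μ ≤ a * ∫ x, φ (u x) ∂μ + b * ∫ x, φ (v x) ∂μ := by
  rw [← integral_const_mul, ← integral_const_mul,
    ← integral_add (hu.const_mul a) (hv.const_mul b)]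
  refine integral_mono_ae huv ((hu.const_mul a).add (hv.const_mul b)) ?_
  filter_upwards [hus, hvs] with x hux hvx using hφ.2 hux hvx ha hb hab

theorem ae_eq_of_integral_comp_convexCombo_eq (hφ : StrictConvexOn ℝ s φ)
    (hus : ∀ᵐ x ∂μ, u x ∈ s) (hvs : ∀ᵐ x ∂μ, v x ∈ s)
    (hu : Integrable (fun x => φ (u x)) μ) (hv : Integrable (fun x => φ (v x)) μ)
    (ha : 0 < a) (hb : 0 < b) (hab : a + b = 1)
    (huv : Integrable (fun x => φ (a • u x + b • v x)) μ)
    (heq : ∫ x, φ (a • u x + b • v x) ∂μ = a * ∫ x, φ (u x) ∂μ + b * ∫ x, φ (v x) ∂μ) :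
    u =ᵐ[μ] v := by
  have hle : (fun x => φ (a • u x + b • v x)) ≤ᵐ[μ] fun x => a * φ (u x) + b * φ (v x) := by
    filter_upwards [hus, hvs] with x hux hvx using hφ.convexOn.2 hux hvx ha.le hb.le hab
  rw [← integral_const_mul, ← integral_const_mul,
    ← integral_add (hu.const_mul a) (hv.const_mul b)] at heq
  have hpointwise := (integral_eq_iff_of_ae_le huv
    ((hu.const_mul a).add (hv.const_mul b)) hle).1 heq
  filter_upwards [hus, hvs, hpointwise] with x hux hvx hx
  by_contra hne
  exact (hφ.2 hux hvx hne ha hb hab).ne hx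

end ConvexIntegrand

section LogIntegralExp

variable {X : Type*} [MeasurableSpace X] {μ : Measure X} {u v : X → ℝ} {a b : ℝ}

/-- The log-partition functional `u ↦ log ∫ exp u dμ`. As `Real.log 0 = 0` and the integral of a
non-integrable function is `0`, it takes the value `0` where `exp u` is not integrable. -/
noncomputable def logIntegralExp (μ : Measure X) (u : X → ℝ) : ℝ :=
  Real.log (∫ x, Real.exp (u x) ∂μ)

variable (μ) in
theorem convex_setOf_integrable_exp :
    Convex ℝ {u : X → ℝ | Integrable (fun x => Real.exp (u x)) μ} := by
  intro u hu v hv a b ha hb hab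
  have hmeas : AEMeasurable (a • u + b • v) μ :=
    ((Real.aemeasurable_of_aemeasurable_exp hu.aemeasurable).const_smul a).add
      ((Real.aemeasurable_of_aemeasurable_exp hv.aemeasurable).const_smul b)
  refine ((hu.const_mul a).add (hv.const_mul b)).mono'
    (Real.measurable_exp.comp_aemeasurable hmeas).aestronglyMeasurable (.of_forall fun x => ?_)
  rw [Real.norm_of_nonneg (Real.exp_nonneg _)]
  exact convexOn_exp.2 (Set.mem_univ (u x)) (Set.mem_univ (v x)) ha hb hab

theorem integrable_exp_sub_const (hu : Integrable (fun x => Real.exp (u x)) μ) (c : ℝ) :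
    Integrable (fun x => Real.exp (u x - c)) μ := by
  simpa only [Real.exp_sub] using hu.div_const (Real.exp c)

variable [NeZero μ]

theorem integral_exp_sub_const (hu : Integrable (fun x => Real.exp (u x)) μ) (c : ℝ) :
    ∫ x, Real.exp (u x - c) ∂μ = Real.exp (logIntegralExp μ u - c) := by
  simp only [Real.exp_sub, integral_div, logIntegralExp, Real.exp_log (integral_exp_pos hu)]

theorem integral_exp_sub_logIntegralExp (hu : Integrable (fun x => Real.exp (u x)) μ) :
    ∫ x, Real.exp (u x - logIntegralExp μ u) ∂μ = 1 := by
  rw [integral_exp_sub_const hu, sub_self, Real.exp_zero]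

theorem integral_exp_convexCombo_sub_logIntegralExp
    (huv : Integrable (fun x => Real.exp ((a • u + b • v) x)) μ) :
    ∫ x, Real.exp (a • (u x - logIntegralExp μ u) + b • (v x - logIntegralExp μ v)) ∂μ =
      Real.exp (logIntegralExp μ (a • u + b • v) -
        (a * logIntegralExp μ u + b * logIntegralExp μ v)) := by
  rw [← integral_exp_sub_const huv]
  congr! 3 with x
  simp only [Pi.add_apply, Pi.smul_apply, smul_eq_mul]
  ring

variable (μ) in
theorem convexOn_logIntegralExp :
    ConvexOn ℝ {u : X → ℝ | Integrable (fun x => Real.exp (u x)) μ} (logIntegralExp μ) := by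
  have hconv := convex_setOf_integrable_exp μ
  refine ⟨hconv, fun u hu v hv a b ha hb hab => ?_⟩
  have hu' := integrable_exp_sub_const hu (logIntegralExp μ u)
  have hv' := integrable_exp_sub_const hv (logIntegralExp μ v)
  have hle := integral_comp_convexCombo_le convexOn_exp (.of_forall fun _ => Set.mem_univ _)
    (.of_forall fun _ => Set.mem_univ _) hu' hv' ha hb hab (hconv hu' hv' ha hb hab)
  rw [integral_exp_convexCombo_sub_logIntegralExp (hconv hu hv ha hb hab),
    integral_exp_sub_logIntegralExp hu, integral_exp_sub_logIntegralExp hv, mul_one, mul_one,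
    hab, Real.exp_le_one_iff, sub_nonpos] at hle
  exact hle

theorem sub_ae_eq_const_of_logIntegralExp_convexCombo_eq
    (hu : Integrable (fun x => Real.exp (u x)) μ) (hv : Integrable (fun x => Real.exp (v x)) μ)
    (ha : 0 < a) (hb : 0 < b) (hab : a + b = 1)
    (heq : logIntegralExp μ (a • u + b • v) = a * logIntegralExp μ u + b * logIntegralExp μ v) :
    ∀ᵐ x ∂μ, v x - u x = logIntegralExp μ v - logIntegralExp μ u := by
  have hconv := convex_setOf_integrable_exp μ
  have hu' := integrable_exp_sub_const hu (logIntegralExp μ u)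
  have hv' := integrable_exp_sub_const hv (logIntegralExp μ v)
  have hnormalized := ae_eq_of_integral_comp_convexCombo_eq strictConvexOn_exp
    (.of_forall fun _ => Set.mem_univ _) (.of_forall fun _ => Set.mem_univ _) hu' hv' ha hb hab
    (hconv hu' hv' ha.le hb.le hab) (by
      rw [integral_exp_convexCombo_sub_logIntegralExp (hconv hu hv ha.le hb.le hab),
        integral_exp_sub_logIntegralExp hu, integral_exp_sub_logIntegralExp hv, heq, sub_self,
        Real.exp_zero, mul_one, mul_one, hab])
  filter_upwards [hnormalized] with x hx
  linarith

theorem exists_sub_ae_eq_const_of_logIntegralExp_lineMap_eq {t₀ t₁ : ℝ} (hne : t₀ ≠ t₁)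
    (h₀ : Integrable (fun x => Real.exp (AffineMap.lineMap u v t₀ x)) μ)
    (h₁ : Integrable (fun x => Real.exp (AffineMap.lineMap u v t₁ x)) μ)
    (ha : 0 < a) (hb : 0 < b) (hab : a + b = 1)
    (heq : logIntegralExp μ (AffineMap.lineMap u v (a • t₀ + b • t₁)) =
      a * logIntegralExp μ (AffineMap.lineMap u v t₀) +
        b * logIntegralExp μ (AffineMap.lineMap u v t₁)) :
    ∃ c : ℝ, ∀ᵐ x ∂μ, v x - u x = c := by
  rw [Convex.combo_affine_apply hab] at heq
  have hconst := sub_ae_eq_const_of_logIntegralExp_convexCombo_eq h₀ h₁ ha hb hab heq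
  refine ⟨(logIntegralExp μ (AffineMap.lineMap u v t₁) -
    logIntegralExp μ (AffineMap.lineMap u v t₀)) / (t₁ - t₀), ?_⟩
  filter_upwards [hconst] with x hx
  rw [eq_div_iff (sub_ne_zero.2 hne.symm), ← hx]
  simp only [AffineMap.lineMap_apply_module, Pi.add_apply, Pi.smul_apply, smul_eq_mul]
  ring

end LogIntegralExp

theorem stmt_14_general {X : Type*} [MeasurableSpace X] (μ : Measure X) [NeZero μ] (S S' : X → ℝ)
    (hexpS : Integrable (fun x => Real.exp (S x)) μ)
    (hexpS' : Integrable (fun x => Real.exp (S' x)) μ)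
    (f : ℝ → ℝ)
    (hf : ∀ t : ℝ, f t = Real.log (∫ x, Real.exp ((1 - t) * S x + t * S' x) ∂μ)) :
    (∀ t ∈ Set.Icc (0 : ℝ) 1,
      Integrable (fun x => Real.exp ((1 - t) * S x + t * S' x)) μ) ∧
    ConvexOn ℝ (Set.Icc (0 : ℝ) 1) f ∧
    (∀ t₀ t₁ : ℝ, 0 ≤ t₀ → t₀ < t₁ → t₁ ≤ 1 →
      f ((t₀ + t₁) / 2) = (f t₀ + f t₁) / 2 →
      ∃ c : ℝ, ∀ᵐ x ∂μ, S' x - S x = c) := by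
  let ℓ : ℝ →ᵃ[ℝ] X → ℝ := AffineMap.lineMap S S'
  have hℓ (t : ℝ) (x : X) : ℓ t x = (1 - t) * S x + t * S' x := by
    simp only [ℓ, AffineMap.lineMap_apply_module, Pi.add_apply, Pi.smul_apply, smul_eq_mul]
  have hint : ∀ t ∈ Set.Icc (0 : ℝ) 1, Integrable (fun x => Real.exp (ℓ t x)) μ :=
    fun t ht => (convex_setOf_integrable_exp μ).lineMap_mem hexpS hexpS' ht
  obtain rfl : f = logIntegralExp μ ∘ ℓ := by
    funext t
    simp only [hf, logIntegralExp, Function.comp_apply, hℓ]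
  refine ⟨by simpa only [hℓ] using hint,
    ((convexOn_logIntegralExp μ).comp_affineMap ℓ).subset hint (convex_Icc 0 1), ?_⟩
  intro t₀ t₁ h₀ hlt h₁ heq
  have hmid : (t₀ + t₁) / 2 = (1 / 2 : ℝ) • t₀ + (1 / 2 : ℝ) • t₁ := by
    simp only [smul_eq_mul]
    ring
  simp only [hmid, Function.comp_apply] at heq
  exact exists_sub_ae_eq_const_of_logIntegralExp_lineMap_eq hlt.ne
    (hint t₀ ⟨h₀, hlt.le.trans h₁⟩) (hint t₁ ⟨h₀.trans hlt.le, h₁⟩)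
    one_half_pos one_half_pos (add_halves 1) (heq.trans (by ring))

/-- The function `f t = ln ∫ exp ((1−t)S + tS') dμ` is real-valued (the integrands are
integrable) and convex on `[0,1]`, and if it fails to be strictly convex then `S' − S` is
`μ`-almost everywhere constant. -/
theorem stmt_14 {X : Type*} [MeasurableSpace X] (μ : Measure X) [IsProbabilityMeasure μ]
    (S S' : X → ℝ) (hS : Measurable S) (hS' : Measurable S')
    (hexpS : Integrable (fun x => Real.exp (S x)) μ)
    (hexpS' : Integrable (fun x => Real.exp (S' x)) μ)
    (f : ℝ → ℝ)
    (hf : ∀ t : ℝ, f t = Real.log (∫ x, Real.exp ((1 - t) * S x + t * S' x) ∂μ)) :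
    (∀ t ∈ Set.Icc (0 : ℝ) 1,
      Integrable (fun x => Real.exp ((1 - t) * S x + t * S' x)) μ) ∧
    ConvexOn ℝ (Set.Icc (0 : ℝ) 1) f ∧
    (∀ t₀ t₁ : ℝ, 0 ≤ t₀ → t₀ < t₁ → t₁ ≤ 1 →
      f ((t₀ + t₁) / 2) = (f t₀ + f t₁) / 2 →
      ∃ c : ℝ, ∀ᵐ x ∂μ, S' x - S x = c) :=
  stmt_14_general μ S S' hexpS hexpS' f hf
end

section
/- Let μ be a finite measure on a measurable space, Y ⊆ L¹(μ) a linear subspace, C ≥ 0, and α : Y → ℝ a linear functional satisfying α(T) ≤ C · ∫ max{T, 0} dμ for every T ∈ Y. Then there exists a μ-essentially bounded measurable function g with g ≥ 0 μ-almost everywhere, ‖g‖_{L^∞(μ)} ≤ C, and α(T) = ∫ g·T dμ for every T ∈ Y. -/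
open Filter MeasureTheory

/-!
By Hahn–Banach, `α` extends to a linear functional on all of `L¹(μ)` that is still dominated by the
sublinear map `f ↦ C ∫ max f 0`. The extension is bounded by `C` and nonnegative on nonnegative
functions, and by the duality `(L¹)* = L^∞` it is integration against some `g`; these two
properties say that `0 ≤ g ≤ C` almost everywhere.

For a finite measure the duality comes from restricting the functional to the Hilbert space
`L² ⊆ L¹`, where the Riesz representation theorem applies. A σ-finite measure is reduced to a
finite one through a strictly positive integrable density.
-/

open scoped ENNReal NNReal

section HahnBanach

variable {V E : Type*} [AddCommGroup V] [Module ℝ V]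

theorem exists_extension_along_of_le_sublinear [AddCommGroup E] [Module ℝ E]
    (ι : V →ₗ[ℝ] E) (α : V →ₗ[ℝ] ℝ) (N : E → ℝ)
    (N_hom : ∀ c : ℝ, 0 < c → ∀ x, N (c • x) = c * N x)
    (N_add : ∀ x y, N (x + y) ≤ N x + N y) (hα : ∀ v, α v ≤ N (ι v)) :
    ∃ β : E →ₗ[ℝ] ℝ, (∀ v, β (ι v) = α v) ∧ ∀ x, β x ≤ N x := by
  have N_zero : N 0 = 0 := by
    have := N_hom 2 two_pos 0
    rw [smul_zero] at this
    linarith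
  have nonpos_of_mem_ker {v : V} (hv : ι v = 0) : α v ≤ 0 := by
    simpa only [hv, N_zero] using hα v
  have ker_le : α ∈ (LinearMap.ker ι).dualAnnihilator := by
    refine (Submodule.mem_dualAnnihilator α).2 fun v hv ↦ ?_
    have h_neg : α (-v) ≤ 0 := nonpos_of_mem_ker (by rw [map_neg, hv, neg_zero])
    rw [map_neg] at h_neg
    linarith [nonpos_of_mem_ker hv]
  rw [← LinearMap.range_dualMap_eq_dualAnnihilator_ker] at ker_le
  obtain ⟨γ, rfl⟩ := ker_le
  obtain ⟨β, hβγ, hβN⟩ := exists_extension_of_le_sublinear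
    ⟨LinearMap.range ι, γ.domRestrict _⟩ N N_hom N_add (by rintro ⟨_, v, rfl⟩; exact hα v)
  exact ⟨β, fun v ↦ hβγ ⟨ι v, v, rfl⟩, hβN⟩

theorem exists_strongDual_extension_along_of_le_sublinear
    [NormedAddCommGroup E] [NormedSpace ℝ E] (ι : V →ₗ[ℝ] E) (α : V →ₗ[ℝ] ℝ) (N : E → ℝ)
    (N_hom : ∀ c : ℝ, 0 < c → ∀ x, N (c • x) = c * N x)
    (N_add : ∀ x y, N (x + y) ≤ N x + N y) {C : ℝ} (hC : 0 ≤ C) (N_le : ∀ x, N x ≤ C * ‖x‖)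
    (hα : ∀ v, α v ≤ N (ι v)) :
    ∃ φ : StrongDual ℝ E, (∀ v, φ (ι v) = α v) ∧ (∀ x, φ x ≤ N x) ∧ ‖φ‖ ≤ C := by
  obtain ⟨β, hβα, hβN⟩ := exists_extension_along_of_le_sublinear ι α N N_hom N_add hα
  have norm_le (x : E) : ‖β x‖ ≤ C * ‖x‖ := by
    refine abs_le'.2 ⟨(hβN x).trans (N_le x), ?_⟩
    simpa only [map_neg, norm_neg] using (hβN (-x)).trans (N_le (-x))
  exact ⟨β.mkContinuous C norm_le, hβα, hβN, β.mkContinuous_norm_le hC norm_le⟩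

end HahnBanach

section Duality

variable {X : Type*} [MeasurableSpace X] {μ : Measure X}

theorem continuousLinearMap_ext_indicatorConstLp {𝕜 F : Type*} [NontriviallyNormedField 𝕜]
    [TopologicalSpace F] [T2Space F] [AddCommMonoid F] [Module 𝕜 F] {p : ℝ≥0∞} [Fact (1 ≤ p)]
    (hp : p ≠ ∞) {φ ψ : Lp 𝕜 p μ →L[𝕜] F}
    (h : ∀ (s : Set X) (hs : MeasurableSet s) (hμs : μ s ≠ ∞),
      φ (indicatorConstLp p hs hμs 1) = ψ (indicatorConstLp p hs hμs 1)) :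
    φ = ψ := by
  ext f
  induction f using Lp.induction hp with
  | indicatorConst c hs hμs =>
    have smul_one : indicatorConstLp p hs hμs.ne c = c • indicatorConstLp p hs hμs.ne (1 : 𝕜) := by
      rw [indicatorConstLp, indicatorConstLp, ← MemLp.toLp_const_smul]
      refine MemLp.toLp_congr _ _ (Eventually.of_forall fun x ↦ ?_)
      rw [Pi.smul_apply, ← Set.indicator_const_smul_apply, smul_eq_mul, mul_one]
    rw [Lp.simpleFunc.coe_indicatorConst, smul_one, map_smul, map_smul, h]
  | add hf hg _ hφf hφg => rw [map_add, map_add, hφf, hφg]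
  | isClosed => exact isClosed_eq φ.continuous ψ.continuous

theorem setIntegral_eq_integral_mul_indicatorConstLp (p : ℝ≥0∞) (g : X → ℝ) {s : Set X}
    (hs : MeasurableSet s) (hμs : μ s ≠ ∞) :
    ∫ x in s, g x ∂μ = ∫ x, g x * indicatorConstLp p hs hμs (1 : ℝ) x ∂μ := by
  rw [← integral_indicator hs]
  refine integral_congr_ae ?_
  filter_upwards [indicatorConstLp_coeFn (p := p) (hs := hs) (hμs := hμs) (c := (1 : ℝ))] with x hx
  rw [hx, ← Set.indicator_mul_right]
  simp only [mul_one]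

theorem ae_abs_le_of_forall_abs_setIntegral_le [SigmaFinite μ] {g : X → ℝ} {C : ℝ}
    (hg : ∀ s, MeasurableSet s → μ s < ∞ → IntegrableOn g s μ)
    (h : ∀ s, MeasurableSet s → μ s < ∞ → |∫ x in s, g x ∂μ| ≤ C * μ.real s) :
    ∀ᵐ x ∂μ, |g x| ≤ C := by
  have hconst {s : Set X} (hμs : μ s < ∞) : IntegrableOn (fun _ ↦ C) s μ :=
    integrableOn_const hμs.ne
  have upper : 0 ≤ᵐ[μ] fun x ↦ C - g x := by
    refine ae_nonneg_of_forall_setIntegral_nonneg_of_sigmaFinite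
      (fun s hs hμs ↦ (hconst hμs).sub (hg s hs hμs)) fun s hs hμs ↦ ?_
    rw [integral_sub (hconst hμs) (hg s hs hμs), setIntegral_const, smul_eq_mul]
    linarith [le_of_abs_le (h s hs hμs)]
  have lower : 0 ≤ᵐ[μ] fun x ↦ C + g x := by
    refine ae_nonneg_of_forall_setIntegral_nonneg_of_sigmaFinite
      (fun s hs hμs ↦ (hconst hμs).add (hg s hs hμs)) fun s hs hμs ↦ ?_
    rw [integral_add (hconst hμs) (hg s hs hμs), setIntegral_const, smul_eq_mul]
    linarith [neg_le_of_abs_le (h s hs hμs)]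
  filter_upwards [upper, lower] with x hu hl
  exact abs_le.2 ⟨by linarith [show 0 ≤ C + g x from hl], sub_nonneg.1 hu⟩

theorem exists_L2_setIntegral_eq_strongDual_L1 [IsFiniteMeasure μ]
    (φ : StrongDual ℝ (Lp ℝ 1 μ)) :
    ∃ g : Lp ℝ 2 μ, ∀ (s : Set X) (hs : MeasurableSet s),
      φ (indicatorConstLp 1 hs (measure_ne_top μ s) 1) = ∫ x in s, g x ∂μ := by
  -- Multiplication by `1 ∈ L²` is the inclusion `L² ⊆ L¹`, and Hölder makes it continuous.
  let toL1 : Lp ℝ 2 μ →L[ℝ] Lp ℝ 1 μ :=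
    (ContinuousLinearMap.mul ℝ ℝ).holderL μ 2 2 1 (Lp.const 2 μ 1)
  have toL1_coe (f : Lp ℝ 2 μ) : toL1 f =ᵐ[μ] f := by
    filter_upwards [(ContinuousLinearMap.mul ℝ ℝ).coeFn_holder (r := 1) (Lp.const 2 μ 1) f,
      Lp.coeFn_const (p := 2) (μ := μ) (1 : ℝ)] with x hmul hone
    exact hmul.trans (by rw [hone, ContinuousLinearMap.mul_apply', Function.const_apply, one_mul])
  refine ⟨(InnerProductSpace.toDual ℝ (Lp ℝ 2 μ)).symm (φ.comp toL1), fun s hs ↦ ?_⟩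
  rw [← L2.inner_indicatorConstLp_one (𝕜 := ℝ) hs (measure_ne_top μ s), real_inner_comm,
    InnerProductSpace.toDual_symm_apply, ContinuousLinearMap.comp_apply]
  congr 1
  ext1
  exact indicatorConstLp_coeFn.trans
    (indicatorConstLp_coeFn.symm.trans (toL1_coe (indicatorConstLp 2 hs _ 1)).symm)

theorem exists_integral_mul_eq_strongDual_L1_of_isFiniteMeasure [IsFiniteMeasure μ]
    (φ : StrongDual ℝ (Lp ℝ 1 μ)) :
    ∃ g : X → ℝ, Measurable g ∧ (∀ᵐ x ∂μ, |g x| ≤ ‖φ‖) ∧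
      ∀ f : Lp ℝ 1 μ, φ f = ∫ x, g x * f x ∂μ := by
  obtain ⟨g, hg⟩ := exists_L2_setIntegral_eq_strongDual_L1 φ
  have abs_le : ∀ᵐ x ∂μ, |g x| ≤ ‖φ‖ := by
    refine ae_abs_le_of_forall_abs_setIntegral_le
      (fun s _ _ ↦ ((Lp.memLp g).integrable one_le_two).integrableOn) fun s hs _ ↦ ?_
    rw [← hg s hs]
    refine (φ.le_opNorm _).trans_eq ?_
    rw [norm_indicatorConstLp one_ne_zero ENNReal.one_ne_top]
    simp only [norm_one, one_mul, ENNReal.toReal_one, div_one, Real.rpow_one]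
  have memLp_top : MemLp g ∞ μ := memLp_top_of_bound (Lp.aestronglyMeasurable g) ‖φ‖ abs_le
  let gTop : Lp ℝ ∞ μ := memLp_top.toLp g
  have integral_gTop (f : Lp ℝ 1 μ) : (ContinuousLinearMap.mul ℝ ℝ).lpPairing μ ∞ 1 gTop f =
      ∫ x, g x * f x ∂μ := by
    rw [ContinuousLinearMap.lpPairing_eq_integral]
    refine integral_congr_ae ?_
    filter_upwards [memLp_top.coeFn_toLp] with x hx
    rw [hx, ContinuousLinearMap.mul_apply']
  have eq_pairing : φ = (ContinuousLinearMap.mul ℝ ℝ).lpPairing μ ∞ 1 gTop := by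
    refine continuousLinearMap_ext_indicatorConstLp ENNReal.one_ne_top fun s hs hμs ↦ ?_
    rw [integral_gTop, ← setIntegral_eq_integral_mul_indicatorConstLp, hg s hs]
  refine ⟨g, (Lp.stronglyMeasurable g).measurable, abs_le, fun f ↦ ?_⟩
  rw [← integral_gTop, ← eq_pairing]

theorem absolutelyContinuous_withDensity_of_ae_ne_zero {w : X → ℝ≥0} (hw : Measurable w)
    (hw₀ : ∀ᵐ x ∂μ, w x ≠ 0) : μ ≪ μ.withDensity fun x ↦ w x :=
  withDensity_absolutelyContinuous' hw.coe_nnreal_ennreal.aemeasurable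
    (hw₀.mono fun _ ↦ ENNReal.coe_ne_zero.2)

theorem withDensitySMulLI_surjective {E : Type*} [NormedAddCommGroup E] [NormedSpace ℝ E]
    {w : X → ℝ≥0} (hw : Measurable w) (hw₀ : ∀ᵐ x ∂μ, w x ≠ 0) :
    Function.Surjective (withDensitySMulLI (E := E) μ hw) := by
  intro f
  have smul_inv_smul_ae : ∀ᵐ x ∂μ, w x • (w x)⁻¹ • f x = f x :=
    hw₀.mono fun x hx ↦ smul_inv_smul₀ hx (f x)
  have hint : Integrable (fun x ↦ (w x)⁻¹ • f x) (μ.withDensity fun x ↦ w x) :=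
    (integrable_withDensity_iff_integrable_smul hw).2
      ((integrable_congr smul_inv_smul_ae).2 (L1.integrable_coeFn f))
  refine ⟨hint.toL1 _, ?_⟩
  have toL1_ae : (hint.toL1 _ : X → E) =ᵐ[μ] fun x ↦ (w x)⁻¹ • f x :=
    (absolutelyContinuous_withDensity_of_ae_ne_zero hw hw₀).ae_eq hint.coeFn_toL1
  ext1
  rw [withDensitySMulLI_apply]
  filter_upwards [MemLp.coeFn_toLp (memL1_smul_of_L1_withDensity hw (hint.toL1 _)), toL1_ae,
    smul_inv_smul_ae] with x hsmul htoL1 hcancel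
  rw [hsmul, htoL1, hcancel]

theorem exists_integral_mul_eq_strongDual_L1 [SigmaFinite μ] (φ : StrongDual ℝ (Lp ℝ 1 μ)) :
    ∃ g : X → ℝ, Measurable g ∧ (∀ᵐ x ∂μ, |g x| ≤ ‖φ‖) ∧
      ∀ f : Lp ℝ 1 μ, φ f = ∫ x, g x * f x ∂μ := by
  obtain ⟨w, hw_pos, hw, hw_lt⟩ := exists_pos_lintegral_lt_of_sigmaFinite μ one_ne_zero
  have : IsFiniteMeasure (μ.withDensity fun x ↦ w x) :=
    isFiniteMeasure_withDensity (hw_lt.trans ENNReal.one_lt_top).ne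
  have hw₀ : ∀ᵐ x ∂μ, w x ≠ 0 := Eventually.of_forall fun x ↦ (hw_pos x).ne'
  let J := withDensitySMulLI (E := ℝ) μ hw
  obtain ⟨g, hg, hgφ, hφg⟩ :=
    exists_integral_mul_eq_strongDual_L1_of_isFiniteMeasure (φ.comp J.toContinuousLinearMap)
  have norm_le : ‖φ.comp J.toContinuousLinearMap‖ ≤ ‖φ‖ :=
    (φ.opNorm_comp_le _).trans
      (mul_le_of_le_one_right (norm_nonneg φ) J.norm_toContinuousLinearMap_le)
  have abs_le : ∀ᵐ x ∂μ, |g x| ≤ ‖φ‖ := by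
    filter_upwards [(absolutelyContinuous_withDensity_of_ae_ne_zero hw hw₀).ae_le hgφ] with x hx
    exact hx.trans norm_le
  refine ⟨g, hg, abs_le, fun f ↦ ?_⟩
  obtain ⟨u, rfl⟩ := withDensitySMulLI_surjective hw hw₀ f
  refine (hφg u).trans ?_
  rw [integral_withDensity_eq_integral_smul hw, withDensitySMulLI_apply]
  refine integral_congr_ae ?_
  filter_upwards [MemLp.coeFn_toLp (memL1_smul_of_L1_withDensity hw u)] with x hx
  rw [hx, mul_smul_comm]

theorem exists_integral_mul_eq_strongDual_L1_of_nonneg [SigmaFinite μ]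
    (φ : StrongDual ℝ (Lp ℝ 1 μ)) (hφ : ∀ f, 0 ≤ f → 0 ≤ φ f) :
    ∃ g : X → ℝ, Measurable g ∧ (∀ᵐ x ∂μ, 0 ≤ g x ∧ g x ≤ ‖φ‖) ∧
      ∀ f : Lp ℝ 1 μ, φ f = ∫ x, g x * f x ∂μ := by
  obtain ⟨g, hg, hgφ, hφg⟩ := exists_integral_mul_eq_strongDual_L1 φ
  have nonneg : 0 ≤ᵐ[μ] g := by
    refine ae_nonneg_of_forall_setIntegral_nonneg_of_sigmaFinite
      (fun s _ hμs ↦ Measure.integrableOn_of_bounded hμs.ne hg.aestronglyMeasurable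
        (ae_restrict_of_ae hgφ)) fun s hs hμs ↦ ?_
    rw [setIntegral_eq_integral_mul_indicatorConstLp 1 g hs hμs.ne, ← hφg]
    refine hφ _ ((Lp.coeFn_nonneg _).1 ?_)
    filter_upwards [indicatorConstLp_coeFn (p := 1) (hs := hs) (hμs := hμs.ne) (c := (1 : ℝ))]
      with x hx
    rw [hx]
    exact Set.indicator_nonneg (fun _ _ ↦ zero_le_one) x
  refine ⟨g, hg, ?_, hφg⟩
  filter_upwards [nonneg, hgφ] with x h_nonneg h_abs
  exact ⟨h_nonneg, le_of_abs_le h_abs⟩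

end Duality

section PositivePart

variable {X : Type*} [MeasurableSpace X] {μ : Measure X}

theorem integral_max_smul_zero {p : ℝ≥0∞} {c : ℝ} (hc : 0 ≤ c) (f : Lp ℝ p μ) :
    ∫ x, max ((c • f) x) 0 ∂μ = c * ∫ x, max (f x) 0 ∂μ := by
  rw [← integral_const_mul]
  refine integral_congr_ae ?_
  filter_upwards [Lp.coeFn_smul c f] with x hx
  rw [hx, Pi.smul_apply, smul_eq_mul, mul_max_of_nonneg _ _ hc, mul_zero]

theorem integral_max_add_zero_le (f g : Lp ℝ 1 μ) :
    ∫ x, max ((f + g) x) 0 ∂μ ≤ ∫ x, max (f x) 0 ∂μ + ∫ x, max (g x) 0 ∂μ := by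
  have integrable_max (f : Lp ℝ 1 μ) : Integrable (fun x ↦ max (f x) 0) μ :=
    (L1.integrable_coeFn f).pos_part
  rw [← integral_add (integrable_max f) (integrable_max g)]
  refine integral_mono_ae (integrable_max _) ((integrable_max f).add (integrable_max g)) ?_
  filter_upwards [Lp.coeFn_add f g] with x hx
  rw [hx, Pi.add_apply]
  exact max_le (add_le_add (le_max_left _ _) (le_max_left _ _))
    (add_nonneg (le_max_right _ _) (le_max_right _ _))

theorem integral_max_zero_le_norm (f : Lp ℝ 1 μ) : ∫ x, max (f x) 0 ∂μ ≤ ‖f‖ := by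
  rw [L1.norm_eq_integral_norm]
  exact integral_mono (L1.integrable_coeFn f).pos_part (L1.integrable_coeFn f).norm
    fun x ↦ max_le (le_abs_self _) (abs_nonneg _)

theorem integral_max_neg_zero_eq_zero {p : ℝ≥0∞} {f : Lp ℝ p μ} (hf : 0 ≤ f) :
    ∫ x, max ((-f) x) 0 ∂μ = 0 := by
  refine integral_eq_zero_of_ae ?_
  filter_upwards [Lp.coeFn_neg f, (Lp.coeFn_nonneg f).2 hf] with x hneg hx
  rw [hneg]
  exact max_eq_right (neg_nonpos.2 hx)

/-- The linear map from a space of integrable functions to `L¹(μ)`, sending a function to its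
class modulo almost everywhere equality. It need not be injective. -/
noncomputable def submoduleToL1 (Y : Submodule ℝ (X → ℝ)) (hY : ∀ T ∈ Y, Integrable T μ) :
    Y →ₗ[ℝ] Lp ℝ 1 μ where
  toFun T := (hY T T.2).toL1 T
  map_add' S T := Integrable.toL1_add (S : X → ℝ) T (hY S S.2) (hY T T.2)
  map_smul' c T := Integrable.toL1_smul' (T : X → ℝ) (hY T T.2) c

theorem coeFn_submoduleToL1 {Y : Submodule ℝ (X → ℝ)} (hY : ∀ T ∈ Y, Integrable T μ) (T : Y) :
    submoduleToL1 Y hY T =ᵐ[μ] T.1 :=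
  Integrable.coeFn_toL1 (hY T T.2)

theorem exists_strongDual_L1_extension_of_le_integral_max
    {Y : Submodule ℝ (X → ℝ)} (hY : ∀ T ∈ Y, Integrable T μ) {C : ℝ} (hC : 0 ≤ C)
    (α : Y →ₗ[ℝ] ℝ) (hα : ∀ T : Y, α T ≤ C * ∫ x, max (T.1 x) 0 ∂μ) :
    ∃ φ : StrongDual ℝ (Lp ℝ 1 μ), (∀ T, φ (submoduleToL1 Y hY T) = α T) ∧
      (∀ f, 0 ≤ f → 0 ≤ φ f) ∧ ‖φ‖ ≤ C := by
  let N : Lp ℝ 1 μ → ℝ := fun f ↦ C * ∫ x, max (f x) 0 ∂μ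
  have N_hom (c : ℝ) (hc : 0 < c) (f : Lp ℝ 1 μ) : N (c • f) = c * N f := by
    simp only [N, integral_max_smul_zero hc.le, mul_left_comm]
  have N_add (f g : Lp ℝ 1 μ) : N (f + g) ≤ N f + N g := by
    simpa only [N, mul_add] using mul_le_mul_of_nonneg_left (integral_max_add_zero_le f g) hC
  have N_le (f : Lp ℝ 1 μ) : N f ≤ C * ‖f‖ :=
    mul_le_mul_of_nonneg_left (integral_max_zero_le_norm f) hC
  have α_le (T : Y) : α T ≤ N (submoduleToL1 Y hY T) := by
    refine (hα T).trans_eq (congrArg (C * ·) (integral_congr_ae ?_))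
    filter_upwards [coeFn_submoduleToL1 hY T] with x hx
    rw [hx]
  obtain ⟨φ, hφα, hφN, hφC⟩ := exists_strongDual_extension_along_of_le_sublinear
    (submoduleToL1 Y hY) α N N_hom N_add hC N_le α_le
  refine ⟨φ, hφα, fun f hf ↦ ?_, hφC⟩
  have h_neg : φ (-f) ≤ 0 := by
    simpa only [N, integral_max_neg_zero_eq_zero hf, mul_zero] using hφN (-f)
  rwa [map_neg, neg_nonpos] at h_neg

end PositivePart

theorem stmt_16_general {X : Type*} [MeasurableSpace X] (μ : Measure X) [SigmaFinite μ]
    (Y : Submodule ℝ (X → ℝ))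
    (hYL1 : ∀ T ∈ Y, Integrable T μ)
    (C : ℝ) (hC : 0 ≤ C)
    (α : Y →ₗ[ℝ] ℝ)
    (hα : ∀ T : X → ℝ, ∀ hT : T ∈ Y, α ⟨T, hT⟩ ≤ C * ∫ x, max (T x) 0 ∂μ) :
    ∃ g : X → ℝ, Measurable g ∧ (∀ᵐ x ∂μ, 0 ≤ g x ∧ g x ≤ C) ∧
      ∀ T : X → ℝ, ∀ hT : T ∈ Y, α ⟨T, hT⟩ = ∫ x, g x * T x ∂μ := by
  obtain ⟨φ, hφα, hφ_nonneg, hφC⟩ :=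
    exists_strongDual_L1_extension_of_le_integral_max hYL1 hC α fun T ↦ hα T T.2
  obtain ⟨g, hg, hgφ, hφg⟩ := exists_integral_mul_eq_strongDual_L1_of_nonneg φ hφ_nonneg
  refine ⟨g, hg, hgφ.mono fun x hx ↦ ⟨hx.1, hx.2.trans hφC⟩, fun T hT ↦ ?_⟩
  rw [← hφα, hφg]
  refine integral_congr_ae ?_
  filter_upwards [coeFn_submoduleToL1 hYL1 ⟨T, hT⟩] with x hx
  rw [hx]

/-- A linear functional `α` on a subspace `Y ⊆ L¹(μ)` with `α T ≤ C ∫ max {T, 0} dμ` is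
represented by integration against a nonnegative function `g ∈ L^∞(μ)` with
`‖g‖_{L^∞} ≤ C`. -/
theorem stmt_16 {X : Type*} [MeasurableSpace X] (μ : Measure X) [IsFiniteMeasure μ]
    (Y : Submodule ℝ (X → ℝ))
    (hYL1 : ∀ T ∈ Y, Integrable T μ)
    (C : ℝ) (hC : 0 ≤ C)
    (α : Y →ₗ[ℝ] ℝ)
    (hα : ∀ T : X → ℝ, ∀ hT : T ∈ Y, α ⟨T, hT⟩ ≤ C * ∫ x, max (T x) 0 ∂μ) :
    ∃ g : X → ℝ, Measurable g ∧ (∀ᵐ x ∂μ, 0 ≤ g x ∧ g x ≤ C) ∧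
      ∀ T : X → ℝ, ∀ hT : T ∈ Y, α ⟨T, hT⟩ = ∫ x, g x * T x ∂μ :=
  stmt_16_general μ Y hYL1 C hC α hα
end

section
/- Let μ be a nonzero finite measure on a measurable space X and g : X → [0, ∞) a measurable function such that μ({x : g(x) ≤ δ}) > 0 for every δ > 0. Then for every ε > 0, the ratio (∫_{{g ≥ ε}} exp(−r·g(x)²/2) dμ(x)) / (∫_X exp(−r·g(x)²/2) dμ(x)) tends to 0 as r → ∞. -/
open Filter MeasureTheory

/-!
The weights `exp (-r φ)` are compared with those at a fixed `r₀` for which `exp (-r₀ φ)` is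
integrable. On `{b ≤ φ}` they are at most `exp (-(r - r₀) b) exp (-r₀ φ)`, while Markov's
inequality bounds the whole integral below by `exp (-r a) μ {φ ≤ a}`. If `a < b`, the quotient of
the two bounds is a constant times `exp (-(b - a) r)`. The theorem is the case `φ = g² / 2`.
-/

section ExponentialWeights

variable {X : Type*} {φ : X → ℝ} {r r₀ a b : ℝ}

lemma setOf_le_subset_setOf_exp_neg_mul_le (hr : 0 ≤ r) :
    {x | φ x ≤ a} ⊆ {x | Real.exp (-r * a) ≤ Real.exp (-r * φ x)} := fun _ hx =>
  Real.exp_le_exp.2 (mul_le_mul_of_nonpos_left hx (neg_nonpos.2 hr))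

variable [MeasurableSpace X] {μ : Measure X}

lemma measure_le_lt_top_of_integrable_exp_neg_mul (hr : 0 ≤ r)
    (hint : Integrable (fun x => Real.exp (-r * φ x)) μ) : μ {x | φ x ≤ a} < ⊤ :=
  (measure_mono (setOf_le_subset_setOf_exp_neg_mul_le hr)).trans_lt
    (hint.measure_ge_lt_top (Real.exp_pos _))

lemma exp_neg_mul_mul_measureReal_le_integral (hr : 0 ≤ r)
    (hint : Integrable (fun x => Real.exp (-r * φ x)) μ) :
    Real.exp (-r * a) * μ.real {x | φ x ≤ a} ≤ ∫ x, Real.exp (-r * φ x) ∂μ :=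
  calc Real.exp (-r * a) * μ.real {x | φ x ≤ a}
      ≤ Real.exp (-r * a) * μ.real {x | Real.exp (-r * a) ≤ Real.exp (-r * φ x)} :=
        mul_le_mul_of_nonneg_left
          (measureReal_mono (setOf_le_subset_setOf_exp_neg_mul_le hr)
            (hint.measure_ge_lt_top (Real.exp_pos _)).ne)
          (Real.exp_pos _).le
    _ ≤ ∫ x, Real.exp (-r * φ x) ∂μ :=
        mul_meas_ge_le_integral_of_nonneg (ae_of_all _ fun _ => (Real.exp_pos _).le) hint _

lemma setIntegral_exp_neg_mul_le (hφ : AEMeasurable φ μ) (hr : r₀ ≤ r)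
    (hint : Integrable (fun x => Real.exp (-r₀ * φ x)) μ) :
    ∫ x in {x | b ≤ φ x}, Real.exp (-r * φ x) ∂μ ≤
      Real.exp (-(r - r₀) * b) * ∫ x, Real.exp (-r₀ * φ x) ∂μ := by
  have hset : NullMeasurableSet {x | b ≤ φ x} μ := nullMeasurableSet_le aemeasurable_const hφ
  have hbound : ∀ᵐ x ∂μ.restrict {x | b ≤ φ x},
      Real.exp (-r * φ x) ≤ Real.exp (-(r - r₀) * b) * Real.exp (-r₀ * φ x) := by
    filter_upwards [ae_restrict_mem₀ hset] with x (hx : b ≤ φ x)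
    rw [← Real.exp_add, Real.exp_le_exp]
    linarith [mul_le_mul_of_nonneg_left hx (sub_nonneg.2 hr)]
  calc ∫ x in {x | b ≤ φ x}, Real.exp (-r * φ x) ∂μ
      ≤ ∫ x in {x | b ≤ φ x}, Real.exp (-(r - r₀) * b) * Real.exp (-r₀ * φ x) ∂μ :=
        integral_mono_of_nonneg (ae_of_all _ fun _ => (Real.exp_pos _).le)
          (hint.const_mul _).integrableOn hbound
    _ ≤ ∫ x, Real.exp (-(r - r₀) * b) * Real.exp (-r₀ * φ x) ∂μ :=
        setIntegral_le_integral (hint.const_mul _) (ae_of_all _ fun _ => by positivity)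
    _ = Real.exp (-(r - r₀) * b) * ∫ x, Real.exp (-r₀ * φ x) ∂μ := integral_const_mul _ _

lemma setIntegral_div_integral_exp_neg_mul_le (hφ : AEMeasurable φ μ) (hr₀ : 0 ≤ r₀) (hr : r₀ ≤ r)
    (hint₀ : Integrable (fun x => Real.exp (-r₀ * φ x)) μ)
    (hint : Integrable (fun x => Real.exp (-r * φ x)) μ) (ha : μ {x | φ x ≤ a} ≠ 0) :
    (∫ x in {x | b ≤ φ x}, Real.exp (-r * φ x) ∂μ) / (∫ x, Real.exp (-r * φ x) ∂μ) ≤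
      Real.exp (r₀ * b) * (∫ x, Real.exp (-r₀ * φ x) ∂μ) / μ.real {x | φ x ≤ a} *
        Real.exp (-((b - a) * r)) := by
  have hmass : 0 < μ.real {x | φ x ≤ a} :=
    ENNReal.toReal_pos ha (measure_le_lt_top_of_integrable_exp_neg_mul hr₀ hint₀).ne
  have hexp : Real.exp (-(r - r₀) * b) =
      Real.exp (r₀ * b) * Real.exp (-((b - a) * r)) * Real.exp (-r * a) := by
    rw [← Real.exp_add, ← Real.exp_add]
    ring_nf
  calc (∫ x in {x | b ≤ φ x}, Real.exp (-r * φ x) ∂μ) / (∫ x, Real.exp (-r * φ x) ∂μ)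
      ≤ (Real.exp (-(r - r₀) * b) * ∫ x, Real.exp (-r₀ * φ x) ∂μ) /
          (Real.exp (-r * a) * μ.real {x | φ x ≤ a}) :=
        div_le_div₀ (by positivity) (setIntegral_exp_neg_mul_le hφ hr hint₀) (by positivity)
          (exp_neg_mul_mul_measureReal_le_integral (hr₀.trans hr) hint)
    _ = _ := by
        rw [hexp]
        field_simp

theorem tendsto_setIntegral_div_integral_exp_neg_mul
    (hint : ∀ᶠ r in atTop, Integrable (fun x => Real.exp (-r * φ x)) μ)
    (ha : μ {x | φ x ≤ a} ≠ 0) (hab : a < b) :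
    Tendsto (fun r : ℝ => (∫ x in {x | b ≤ φ x}, Real.exp (-r * φ x) ∂μ) /
      (∫ x, Real.exp (-r * φ x) ∂μ)) atTop (nhds 0) := by
  obtain ⟨r₀, hint₀, hr₀⟩ := (hint.and (eventually_gt_atTop 0)).exists
  have hφ : AEMeasurable φ μ :=
    Real.aemeasurable_of_aemeasurable_exp_mul (neg_ne_zero.2 hr₀.ne') hint₀.aemeasurable
  have hdecay : Tendsto (fun r : ℝ => Real.exp (-((b - a) * r))) atTop (nhds 0) :=
    Real.tendsto_exp_neg_atTop_nhds_zero.comp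
      (tendsto_id.const_mul_atTop (sub_pos.2 hab))
  have hbound := hdecay.const_mul
    (Real.exp (r₀ * b) * (∫ x, Real.exp (-r₀ * φ x) ∂μ) / μ.real {x | φ x ≤ a})
  rw [mul_zero] at hbound
  refine squeeze_zero' (Eventually.of_forall fun r => by positivity) ?_ hbound
  filter_upwards [hint, eventually_ge_atTop r₀] with r hintr hr
  exact setIntegral_div_integral_exp_neg_mul_le hφ hr₀.le hr hint₀ hintr ha

lemma integrable_exp_neg_mul_of_le (hφ : AEMeasurable φ μ) (hφ_nonneg : 0 ≤ᵐ[μ] φ) (hr : r₀ ≤ r)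
    (hint : Integrable (fun x => Real.exp (-r₀ * φ x)) μ) :
    Integrable (fun x => Real.exp (-r * φ x)) μ := by
  refine hint.mono' (by fun_prop) ?_
  filter_upwards [hφ_nonneg] with x hx
  rw [Real.norm_eq_abs, Real.abs_exp, Real.exp_le_exp]
  exact mul_le_mul_of_nonneg_right (neg_le_neg hr) hx

end ExponentialWeights

theorem stmt_18_general {X : Type*} [MeasurableSpace X] {μ : Measure X} {g : X → ℝ}
    (hg : AEMeasurable g μ) (hgnn : ∀ x, 0 ≤ g x) {r₀ : ℝ}
    (hint : Integrable (fun x => Real.exp (-(r₀ * g x ^ 2) / 2)) μ)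
    (hpos : ∀ δ > (0 : ℝ), 0 < μ {x | g x ≤ δ}) {ε : ℝ} (hε : 0 < ε) :
    Tendsto
      (fun r : ℝ => (∫ x in {x | ε ≤ g x}, Real.exp (-(r * g x ^ 2) / 2) ∂μ) /
        (∫ x, Real.exp (-(r * g x ^ 2) / 2) ∂μ))
      atTop (nhds 0) := by
  have hweight (r : ℝ) (x : X) : -(r * g x ^ 2) / 2 = -r * (g x ^ 2 / 2) := by ring
  have hlevel {s t : ℝ} (hs : 0 ≤ s) (ht : 0 ≤ t) : s ≤ t ↔ s ^ 2 / 2 ≤ t ^ 2 / 2 := by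
    rw [div_le_div_iff_of_pos_right two_pos, sq_le_sq₀ hs ht]
  have hhalf : 0 < ε / 2 := half_pos hε
  have hmass := (hpos (ε / 2) hhalf).ne'
  simp only [hweight] at hint ⊢
  simp only [hlevel (hgnn _) hhalf.le] at hmass
  simp only [hlevel hε.le (hgnn _)]
  refine tendsto_setIntegral_div_integral_exp_neg_mul ?_ hmass (by gcongr; exact half_lt_self hε)
  filter_upwards [eventually_ge_atTop r₀] with r hr
  exact integrable_exp_neg_mul_of_le (by fun_prop) (ae_of_all _ fun x => by positivity) hr hint

/-- If `μ` is a nonzero finite measure and `g ≥ 0` is measurable with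
`μ {g ≤ δ} > 0` for every `δ > 0`, then for every `ε > 0` the mass ratio
`(∫_{g ≥ ε} exp (−r g²/2) dμ) / (∫ exp (−r g²/2) dμ)` tends to `0` as `r → ∞`. -/
theorem stmt_18 {X : Type*} [MeasurableSpace X] (μ : Measure X) [IsFiniteMeasure μ]
    (hμ : μ ≠ 0)
    (g : X → ℝ) (hg : Measurable g) (hgnn : ∀ x, 0 ≤ g x)
    (hpos : ∀ δ > (0 : ℝ), 0 < μ {x | g x ≤ δ}) :
    ∀ ε > (0 : ℝ),
      Filter.Tendsto
        (fun r : ℝ => (∫ x in {x | ε ≤ g x}, Real.exp (-(r * g x ^ 2) / 2) ∂μ) /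
          (∫ x, Real.exp (-(r * g x ^ 2) / 2) ∂μ))
        Filter.atTop (nhds 0) := by
  intro ε hε
  exact stmt_18_general hg.aemeasurable hgnn (r₀ := 0) (by simp) hpos hε
end
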